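/- There exists an absolute constant C > 0 such that for every odd prime q and every integer k ≥ 1 with r = gcd(k, q−1) and h = (q−1)/r even, one has |γ_{k,q} − γ| ≤ C·( (log q)³/(q^{1/r}·log log q) + r·(log q)²/√q ), where γ is the Euler–Mascheroni constant. -/

import Mathlib

open Filter Topology

/-- The `k`-th divisor sum function `σ_k(n) = ∑_{d ∣ n} d^k`. -/
def sigmak (k n : ℕ) : ℕ := ∑ d ∈ n.divisors, d ^ k

/-- The multiplicative order `g_p` of `p^m` modulo `q`. -/
noncomputable def gp (q m p : ℕ) : ℕ := orderOf ((p : ZMod q) ^ m)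

/-- The local term at a prime `p` of the prime sum `S(m,q)` of the paper. -/
noncomputable def Sterm (q m p : ℕ) : ℝ :=
  if p = q then 0 else
    (if gp q m p = 1 then
        (q : ℝ) * Real.log p / ((p : ℝ) ^ q - 1)
          - ((q : ℝ) - 1) * Real.log p / ((p : ℝ) ^ (q - 1) - 1)
      else 0)
    + (if 3 ≤ gp q m p then
        (gp q m p : ℝ) * Real.log p / ((p : ℝ) ^ gp q m p - 1)
          - ((gp q m p : ℝ) - 1) * Real.log p / ((p : ℝ) ^ (gp q m p - 1) - 1)
      else 0)
    + (if gp q m p = 2 then Real.log p / ((p : ℝ) ^ 2 - 1) else 0)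
    + (if 4 ≤ gp q m p ∧ 2 ∣ gp q m p then
        Real.log p / ((p : ℝ) ^ (gp q m p / 2) - ((p : ℝ) ^ (gp q m p / 2))⁻¹)
      else 0)

/-- The prime sum `S(m,q)` of the paper (a sum over all primes `p ≠ q`). -/
noncomputable def Smq (q m : ℕ) : ℝ := ∑' p : Nat.Primes, Sterm q m (p : ℕ)

/-- The Dirichlet L-function attached to a Dirichlet character mod `q` (junk value for `q = 0`). -/
noncomputable def Lfun {q : ℕ} (χ : DirichletCharacter ℂ q) (s : ℂ) : ℂ :=
  if h : q = 0 then 0 else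
    haveI : NeZero q := ⟨h⟩
    DirichletCharacter.LFunction χ s

/-- `γ_{K_m} = γ + ∑_{χ ∈ X_m^*} (L'/L)(1,χ)`, the Euler–Kronecker constant of the unique
subfield of `ℚ(ζ_q)` of degree `(q-1)/m`; here `X_m^*` is the set of nonprincipal Dirichlet
characters mod `q` that are trivial on the group `C_m` of `m`-th roots of unity mod `q`. -/
noncomputable def gammaK (q m : ℕ) : ℝ :=
  Real.eulerMascheroniConstant +
    (∑ᶠ χ ∈ {χ : DirichletCharacter ℂ q | χ ≠ 1 ∧ ∀ a : ZMod q, a ^ m = 1 → χ a = 1},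
      deriv (Lfun χ) 1 / Lfun χ 1).re

/-- The Euler–Kronecker constant `γ_{k,q}`, for `q` an odd prime, `r = gcd(k, q-1)` and
`h = (q-1)/r` even:  `γ_{k,q} = γ − (1/h)(2γ_{K_{2r}} − γ_{K_r}) − log q/(h(q−1)) − S(r,q)`. -/
noncomputable def gammakq (q k : ℕ) : ℝ :=
  Real.eulerMascheroniConstant
    - (1 / (((q - 1) / Nat.gcd k (q - 1) : ℕ) : ℝ)) *
        (2 * gammaK q (2 * Nat.gcd k (q - 1)) - gammaK q (Nat.gcd k (q - 1)))
    - Real.log q / ((((q - 1) / Nat.gcd k (q - 1) : ℕ) : ℝ) * ((q : ℝ) - 1))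
    - Smq q (Nat.gcd k (q - 1))

/-- `γ'_{k,q} = γ_{k,q} + log q/(q-1)`. -/
noncomputable def gammakq' (q k : ℕ) : ℝ := gammakq q k + Real.log q / ((q : ℝ) - 1)

/-!
Choose `b` modulo `q` with `b ^ r = -1`. A character `χ ∈ X_r` has `χ(b) = 1` or `χ(b) = -1`
according to whether it lies in `X_{2r}`, so `2 γ_{K_{2r}} - γ_{K_r}` is `γ` plus the real part of
`∑ χ(b) L'/L(1, χ)` over the nonprincipal `χ ∈ X_r`. At `1 + u` in place of `1`, orthogonality turns
this sum, with the principal character included, into `-h ∑ Λ(n) n ^ (-1 - u)` over the `n` with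
`n ^ r ≡ -1` modulo `q`. There are at most `r` such residues and none is smaller than about
`q ^ (1/r)`, which makes the sum small.

To pass to `s = 1`, extrapolate from `1 + δ, 1 + 2δ, 1 + 3δ` with `δ = q ^ (-1/4)` by a third
forward difference. For complex `χ` the inequality `3 + 4 cos θ + cos 2θ ≥ 0` gives a disc around
`1` free of zeros of `L(s, χ)`, and the third difference of `L'/L` is `O(δ ^ 2)`. The at most one
nonprincipal real `χ` only needs `L(1, χ) ≫ 1 / √q`. That bound comes from the Lambert series
`F(t) = ∑ χ(n) / (exp (n t) - 1) = ∑ (∑_{d ∣ n} χ(d)) exp (-n t)`: in `F(t) - F(2t)` all terms are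
nonnegative and the squares contribute `≫ t ^ (-1/2)`, while two partial summations against the
convex function `1 / t - 1 / (exp t - 1)` give `F(t) - F(2t) = L(1, χ) / (2 t) + O(q ^ (3/2) t)`.

The local term of `S(r, q)` at `p` is at most `3 log (p ^ e) / p ^ e` for some `e ≥ 2` with
`q ≤ 2 p ^ (e r)`, which is about `log q / (r q ^ (1/r))` at worst. This bound is only spent on the
few `p` that are at most `log q` or have small order modulo `q`; the remaining `p` contribute
`O(q ^ (-1/r))` below `q` and `O(q ^ (-1/2))` above.
-/

/-! ### Elementary estimates -/

lemma one_le_log_natCast {n : ℕ} (hn : 3 ≤ n) : 1 ≤ Real.log n :=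
  (by linarith [Real.log_three_gt_d9] : 1 ≤ Real.log 3).trans
    (Real.log_le_log (by norm_num) (by exact_mod_cast hn))

lemma sum_range_inv_le_one_add_log (N : ℕ) :
    ∑ n ∈ Finset.range N, ((n + 1 : ℕ) : ℝ)⁻¹ ≤ 1 + Real.log N := by
  simpa [harmonic] using harmonic_le_one_add_log N

lemma sum_range_rpow_tail_le {x : ℝ} (hx : 0 < x) {N : ℕ} (hN : 1 ≤ N) (M : ℕ) :
    ∑ n ∈ Finset.range M, ((N + n + 1 : ℕ) : ℝ) ^ (-(1 + x)) ≤ (N : ℝ) ^ (-x) / x := by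
  have hN0 : (0 : ℝ) < N := by exact_mod_cast hN
  have hanti : AntitoneOn (fun t : ℝ => t ^ (-(1 + x))) (Set.Icc N (N + M)) :=
    fun a ha b _ hab => Real.rpow_le_rpow_of_nonpos (hN0.trans_le ha.1) hab (by linarith)
  have hzero : (0 : ℝ) ∉ Set.uIcc (N : ℝ) (N + M) := by
    rw [Set.uIcc_of_le (by simp)]
    exact fun h => hN0.not_ge h.1
  calc ∑ n ∈ Finset.range M, ((N + n + 1 : ℕ) : ℝ) ^ (-(1 + x))
      = ∑ n ∈ Finset.range M, ((N : ℝ) + (n + 1 : ℕ)) ^ (-(1 + x)) := by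
        simp only [add_assoc, Nat.cast_add]
    _ ≤ ∫ t in (N : ℝ)..N + M, t ^ (-(1 + x)) := hanti.sum_le_integral
    _ = ((N : ℝ) ^ (-x) - ((N : ℝ) + M) ^ (-x)) / x := by
        rw [integral_rpow (Or.inr ⟨by linarith, hzero⟩), show -(1 + x) + 1 = -x by ring, div_neg,
          ← neg_div, neg_sub]
    _ ≤ (N : ℝ) ^ (-x) / x := by
        gcongr
        exact sub_le_self _ (by positivity)

lemma summable_rpow_tail {x : ℝ} (hx : 0 < x) (N : ℕ) :
    Summable fun n : ℕ => ((N + n + 1 : ℕ) : ℝ) ^ (-(1 + x)) := by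
  have h := (summable_nat_add_iff (N + 1)).mpr
    (Real.summable_nat_rpow.mpr (by linarith : -(1 + x) < -1))
  exact h.congr fun n => by rw [show n + (N + 1) = N + n + 1 by ring]

lemma tsum_rpow_tail_le {x : ℝ} (hx : 0 < x) {N : ℕ} (hN : 1 ≤ N) :
    ∑' n : ℕ, ((N + n + 1 : ℕ) : ℝ) ^ (-(1 + x)) ≤ (N : ℝ) ^ (-x) / x :=
  Real.tsum_le_of_sum_range_le (fun _ => by positivity) (sum_range_rpow_tail_le hx hN)

lemma summable_rpow_succ {x : ℝ} (hx : 0 < x) :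
    Summable fun n : ℕ => ((n + 1 : ℕ) : ℝ) ^ (-(1 + x)) := by
  simpa only [zero_add] using summable_rpow_tail hx 0

lemma tsum_rpow_succ_le {x : ℝ} (hx : 0 < x) :
    ∑' n : ℕ, ((n + 1 : ℕ) : ℝ) ^ (-(1 + x)) ≤ 1 + 1 / x := by
  have h := tsum_rpow_tail_le hx le_rfl
  rw [(summable_rpow_succ hx).tsum_eq_zero_add]
  simpa [add_comm (1 : ℝ)] using h

lemma sum_range_natCast_zmod {M : Type*} [AddCommMonoid M] {q : ℕ} [NeZero q] (f : ZMod q → M) :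
    ∑ m ∈ Finset.range q, f m = ∑ a, f a :=
  Finset.sum_bij' (fun m _ => (m : ZMod q)) (fun a _ => a.val) (by simp)
    (fun a _ => by simpa using ZMod.val_lt a)
    (fun m hm => by simpa using ZMod.val_cast_of_lt (Finset.mem_range.mp hm)) (by simp) (by simp)

/-! ### Character sums and Abel summation -/

lemma sum_mul_eq_sum_partialSum_mul_sub {R : Type*} [CommRing R] (a g : ℕ → R) (N : ℕ) :
    ∑ n ∈ Finset.range N, a n * g n = (∑ i ∈ Finset.range N, a i) * g N +
      ∑ n ∈ Finset.range N, (∑ i ∈ Finset.range (n + 1), a i) * (g n - g (n + 1)) := by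
  induction N with
  | zero => simp
  | succ N ih =>
    simp only [Finset.sum_range_succ _ N, ih]
    ring

section CharSum

variable {q : ℕ} {χ : DirichletCharacter ℂ q}

/-- The partial sum `∑_{1 ≤ m ≤ n} χ(m)` of a Dirichlet character. -/
noncomputable def charSum (χ : DirichletCharacter ℂ q) (n : ℕ) : ℂ :=
  ∑ m ∈ Finset.range n, χ ((m + 1 : ℕ) : ZMod q)

lemma norm_charSum_le_self (χ : DirichletCharacter ℂ q) (n : ℕ) : ‖charSum χ n‖ ≤ n := by
  simpa [charSum] using norm_sum_le_of_le (Finset.range n)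
    fun m _ => χ.norm_le_one ((m + 1 : ℕ) : ZMod q)

lemma charSum_periodic [NeZero q] (hχ : χ ≠ 1) : Function.Periodic (charSum χ) q := by
  intro n
  have hperiod : ∑ m ∈ Finset.range q, χ ((m + 1 : ℕ) : ZMod q) = 0 := by
    push_cast
    rw [sum_range_natCast_zmod fun a => χ (a + 1), ← MulChar.sum_eq_zero_of_ne_one hχ]
    exact Equiv.sum_comp (Equiv.addRight (1 : ZMod q)) χ
  rw [charSum, charSum, add_comm n q, Finset.sum_range_add, hperiod, zero_add]
  simp

lemma norm_charSum_le [NeZero q] (hχ : χ ≠ 1) (n : ℕ) : ‖charSum χ n‖ ≤ q := by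
  rw [← (charSum_periodic hχ).map_mod_nat n]
  exact (norm_charSum_le_self χ _).trans (by exact_mod_cast (Nat.mod_lt n (NeZero.pos q)).le)

lemma tendsto_sum_char_mul [NeZero q] (hχ : χ ≠ 1) {g : ℕ → ℂ} (hg : Tendsto g atTop (𝓝 0))
    (hs : Summable fun n => charSum χ (n + 1) * (g n - g (n + 1))) :
    Tendsto (fun N => ∑ n ∈ Finset.range N, χ ((n + 1 : ℕ) : ZMod q) * g n) atTop
      (𝓝 (∑' n, charSum χ (n + 1) * (g n - g (n + 1)))) := by
  have hboundary : Tendsto (fun N => charSum χ N * g N) atTop (𝓝 0) :=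
    isBoundedUnder_le_mul_tendsto_zero (isBoundedUnder_of ⟨(q : ℝ), norm_charSum_le hχ⟩) hg
  rw [← zero_add (∑' n, _)]
  exact (hboundary.add hs.hasSum.tendsto_sum_nat).congr fun N =>
    (sum_mul_eq_sum_partialSum_mul_sub _ g N).symm

end CharSum

/-! ### Dirichlet `L`-functions to the right of `0` -/

section LFunction

variable {q : ℕ} {χ : DirichletCharacter ℂ q}

lemma norm_natCast_cpow_sub_le {s : ℂ} (hs : 0 < s.re) {n : ℕ} (hn : 1 ≤ n) :
    ‖(n : ℂ) ^ (-s) - ((n + 1 : ℕ) : ℂ) ^ (-s)‖ ≤ ‖s‖ * (n : ℝ) ^ (-(1 + s.re)) := by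
  have hn0 : (0 : ℝ) < n := by exact_mod_cast hn
  have hs0 : -s ≠ 0 := fun h => by simp [neg_eq_zero.mp h] at hs
  have hderiv : ∀ t ∈ Set.Icc (n : ℝ) (n + 1), HasDerivWithinAt (fun t : ℝ => (t : ℂ) ^ (-s))
      (-s * (t : ℂ) ^ (-s - 1)) (Set.Icc (n : ℝ) (n + 1)) t := fun t ht =>
    (hasDerivAt_ofReal_cpow_const (hn0.trans_le ht.1).ne' hs0).hasDerivWithinAt
  have hbound : ∀ t ∈ Set.Icc (n : ℝ) (n + 1),
      ‖-s * (t : ℂ) ^ (-s - 1)‖ ≤ ‖s‖ * (n : ℝ) ^ (-(1 + s.re)) := by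
    intro t ht
    rw [norm_mul, norm_neg, Complex.norm_cpow_eq_rpow_re_of_pos (hn0.trans_le ht.1),
      show (-s - 1).re = -(1 + s.re) by simp; ring]
    gcongr ‖s‖ * ?_
    exact Real.rpow_le_rpow_of_nonpos hn0 ht.1 (by linarith)
  simpa using Convex.norm_image_sub_le_of_norm_hasDerivWithin_le hderiv hbound (convex_Icc _ _)
    (x := (n + 1 : ℝ)) (y := n) (by simp) (by simp)

/-- The `n`-th summand of the Dirichlet series of `L(s, χ)` after partial summation; the resulting
series converges absolutely for `0 < re s`. -/
noncomputable def abelTerm (χ : DirichletCharacter ℂ q) (n : ℕ) (s : ℂ) : ℂ :=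
  charSum χ (n + 1) * (((n + 1 : ℕ) : ℂ) ^ (-s) - ((n + 2 : ℕ) : ℂ) ^ (-s))

lemma norm_abelTerm_le (χ : DirichletCharacter ℂ q) (n : ℕ) {s : ℂ} (hs : 0 < s.re) :
    ‖abelTerm χ n s‖ ≤ ‖charSum χ (n + 1)‖ * (‖s‖ * ((n + 1 : ℕ) : ℝ) ^ (-(1 + s.re))) := by
  rw [abelTerm, norm_mul]
  gcongr
  exact norm_natCast_cpow_sub_le hs (by omega)

lemma differentiable_abelTerm (χ : DirichletCharacter ℂ q) (n : ℕ) :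
    Differentiable ℂ (abelTerm χ n) := by
  have hpow : ∀ m : ℕ, m ≠ 0 → Differentiable ℂ fun s : ℂ => (m : ℂ) ^ (-s) := fun m hm s =>
    (differentiableAt_neg_iff.mpr differentiableAt_id).const_cpow (Or.inl (Nat.cast_ne_zero.mpr hm))
  exact ((hpow _ (by omega)).sub (hpow _ (by omega))).const_mul _

variable [NeZero q]

lemma norm_abelTerm_le_of_le (hχ : χ ≠ 1) {σ B : ℝ} (hσ : 0 < σ) {s : ℂ} (hs : σ ≤ s.re)
    (hB : ‖s‖ ≤ B) (n : ℕ) : ‖abelTerm χ n s‖ ≤ q * B * ((n + 1 : ℕ) : ℝ) ^ (-(1 + σ)) := by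
  refine (norm_abelTerm_le χ n (hσ.trans_le hs)).trans ?_
  rw [mul_assoc]
  have hB0 : 0 ≤ B := (norm_nonneg s).trans hB
  gcongr
  · exact norm_charSum_le hχ _
  · exact_mod_cast Nat.le_add_left 1 n

lemma summable_abelTerm (hχ : χ ≠ 1) {s : ℂ} (hs : 0 < s.re) : Summable fun n => abelTerm χ n s :=
  .of_norm_bounded ((summable_rpow_succ hs).mul_left _)
    (norm_abelTerm_le_of_le hχ hs le_rfl le_rfl)

lemma differentiableOn_tsum_abelTerm (hχ : χ ≠ 1) :
    DifferentiableOn ℂ (fun s => ∑' n, abelTerm χ n s) {s : ℂ | 0 < s.re} := by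
  intro s₀ (hs₀ : 0 < s₀.re)
  let U : Set ℂ := {s | s₀.re / 2 < s.re} ∩ Metric.ball 0 (‖s₀‖ + 1)
  have hU : IsOpen U := (isOpen_lt continuous_const Complex.continuous_re).inter Metric.isOpen_ball
  have hmem : s₀ ∈ U := ⟨half_lt_self hs₀, by simp⟩
  have hd : DifferentiableOn ℂ (fun s => ∑' n, abelTerm χ n s) U :=
    Complex.differentiableOn_tsum_of_summable_norm
      ((summable_rpow_succ (half_pos hs₀)).mul_left _)
      (fun n => (differentiable_abelTerm χ n).differentiableOn) hU fun n w hw =>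
        norm_abelTerm_le_of_le hχ (half_pos hs₀) (le_of_lt hw.1) (mem_ball_zero_iff.mp hw.2).le n
  exact (hd.differentiableAt (hU.mem_nhds hmem)).differentiableWithinAt

lemma tendsto_sum_char_mul_cpow (hχ : χ ≠ 1) {s : ℂ} (hs : 0 < s.re) :
    Tendsto (fun N => ∑ n ∈ Finset.range N, χ ((n + 1 : ℕ) : ZMod q) * ((n + 1 : ℕ) : ℂ) ^ (-s))
      atTop (𝓝 (∑' n, abelTerm χ n s)) := by
  refine tendsto_sum_char_mul hχ (g := fun n => ((n + 1 : ℕ) : ℂ) ^ (-s)) ?_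
    (summable_abelTerm hχ hs)
  have h := (tendsto_rpow_neg_atTop hs).comp
    (tendsto_natCast_atTop_atTop.comp (tendsto_add_atTop_nat 1))
  refine tendsto_zero_iff_norm_tendsto_zero.mpr (h.congr fun n => ?_)
  rw [Complex.norm_natCast_cpow_of_pos n.succ_pos]
  simp

lemma LFunction_eq_tsum_abelTerm_of_one_lt_re (hχ : χ ≠ 1) {s : ℂ} (hs : 1 < s.re) :
    DirichletCharacter.LFunction χ s = ∑' n, abelTerm χ n s := by
  rw [DirichletCharacter.LFunction_eq_LSeries χ hs]
  have hL := (hasSum_nat_add_iff' 1).mpr (ZMod.LSeriesSummable_of_one_lt_re χ hs).hasSum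
  simp only [Finset.range_one, Finset.sum_singleton, LSeries.term_zero, sub_zero] at hL
  refine tendsto_nhds_unique (hL.tendsto_sum_nat.congr fun N => Finset.sum_congr rfl fun n _ => ?_)
    (tendsto_sum_char_mul_cpow hχ (by linarith))
  rw [LSeries.term_of_ne_zero n.succ_ne_zero, Complex.cpow_neg, div_eq_mul_inv]

lemma LFunction_eq_tsum_abelTerm (hχ : χ ≠ 1) {s : ℂ} (hs : 0 < s.re) :
    DirichletCharacter.LFunction χ s = ∑' n, abelTerm χ n s := by
  have hopen (a : ℝ) : IsOpen {s : ℂ | a < s.re} := isOpen_lt continuous_const Complex.continuous_re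
  have hL : AnalyticOnNhd ℂ (DirichletCharacter.LFunction χ) {s : ℂ | 0 < s.re} :=
    (DirichletCharacter.differentiable_LFunction hχ).differentiableOn.analyticOnNhd (hopen 0)
  have hA := (differentiableOn_tsum_abelTerm hχ).analyticOnNhd (hopen 0)
  refine hL.eqOn_of_preconnected_of_eventuallyEq hA (convex_halfSpace_re_gt 0).isPreconnected
    (z₀ := 2) (by simp) ?_ hs
  filter_upwards [(hopen 1).mem_nhds (by simp : (2 : ℂ) ∈ {s : ℂ | 1 < s.re})] with w hw
  exact LFunction_eq_tsum_abelTerm_of_one_lt_re hχ hw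

lemma tendsto_sum_char_mul_inv (hχ : χ ≠ 1) :
    Tendsto (fun N => ∑ n ∈ Finset.range N, χ ((n + 1 : ℕ) : ZMod q) * ((n + 1 : ℕ) : ℂ)⁻¹) atTop
      (𝓝 (DirichletCharacter.LFunction χ 1)) := by
  rw [LFunction_eq_tsum_abelTerm hχ (by simp)]
  simpa only [Complex.cpow_neg_one] using tendsto_sum_char_mul_cpow hχ (s := 1) (by simp)

lemma norm_LFunction_le_sum (hχ : χ ≠ 1) {s : ℂ} (hs : 0 < s.re) :
    ‖DirichletCharacter.LFunction χ s‖ ≤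
      ‖s‖ * (∑ n ∈ Finset.range q, ((n + 1 : ℕ) : ℝ) ^ (-s.re) + (q : ℝ) ^ (1 - s.re) / s.re) := by
  have hq : (0 : ℝ) < q := by exact_mod_cast NeZero.pos q
  have hhead : ‖∑ n ∈ Finset.range q, abelTerm χ n s‖ ≤
      ‖s‖ * ∑ n ∈ Finset.range q, ((n + 1 : ℕ) : ℝ) ^ (-s.re) := by
    rw [Finset.mul_sum]
    refine norm_sum_le_of_le _ fun n _ => (norm_abelTerm_le χ n hs).trans ?_
    have hn : (0 : ℝ) < ((n + 1 : ℕ) : ℝ) := by positivity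
    calc ‖charSum χ (n + 1)‖ * (‖s‖ * ((n + 1 : ℕ) : ℝ) ^ (-(1 + s.re)))
        ≤ ((n + 1 : ℕ) : ℝ) * (‖s‖ * ((n + 1 : ℕ) : ℝ) ^ (-(1 + s.re))) := by
          gcongr
          exact norm_charSum_le_self χ _
      _ = ‖s‖ * ((n + 1 : ℕ) : ℝ) ^ (-s.re) := by
          rw [neg_add, Real.rpow_add hn, Real.rpow_neg_one]
          field_simp
  have htail : ‖∑' n, abelTerm χ (n + q) s‖ ≤ ‖s‖ * ((q : ℝ) ^ (1 - s.re) / s.re) := by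
    refine (tsum_of_norm_bounded (((summable_rpow_tail hs q).mul_left (q * ‖s‖)).hasSum)
      fun n => ?_).trans ?_
    · refine (norm_abelTerm_le χ _ hs).trans ?_
      rw [mul_assoc, add_comm n q]
      gcongr
      exact norm_charSum_le hχ _
    · rw [tsum_mul_left, sub_eq_add_neg, Real.rpow_add hq, Real.rpow_one,
        show ‖s‖ * (q * (q : ℝ) ^ (-s.re) / s.re) = q * ‖s‖ * ((q : ℝ) ^ (-s.re) / s.re) by ring]
      gcongr
      exact tsum_rpow_tail_le hs (NeZero.pos q)
  rw [LFunction_eq_tsum_abelTerm hχ hs, ← (summable_abelTerm hχ hs).sum_add_tsum_nat_add q, mul_add]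
  exact (norm_add_le _ _).trans (add_le_add hhead htail)

end LFunction

/-! ### Bounds for `L(s, χ)` near `1` -/

section NearOne

variable {q : ℕ} {χ : DirichletCharacter ℂ q}

lemma rpow_one_sub_le_two {a b σ : ℝ} (ha : 1 ≤ a) (hab : a ≤ b) (hb : 1 ≤ Real.log b)
    (hσ : 1 - σ ≤ 1 / (2 * Real.log b)) : a ^ (1 - σ) ≤ 2 := by
  have hloga : 0 ≤ Real.log a := Real.log_nonneg ha
  have hexponent : Real.log a * (1 - σ) ≤ 1 / 2 := by
    calc Real.log a * (1 - σ) ≤ Real.log a * (1 / (2 * Real.log b)) := by gcongr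
      _ ≤ Real.log b * (1 / (2 * Real.log b)) := by gcongr
      _ = 1 / 2 := by field_simp
  rw [Real.rpow_def_of_pos (by linarith), ← Real.le_log_iff_exp_le (by norm_num)]
  linarith [Real.log_two_gt_d9]

lemma norm_LFunction_le [NeZero q] (hq : 3 ≤ q) (hχ : χ ≠ 1) {s : ℂ}
    (hs : ‖s - 1‖ ≤ 1 / (2 * Real.log q)) :
    ‖DirichletCharacter.LFunction χ s‖ ≤ 16 * Real.log q := by
  have hL := one_le_log_natCast hq
  have hs' : ‖s - 1‖ ≤ 1 / 2 := hs.trans (by gcongr; linarith)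
  have hre := (abs_le.mp (Complex.abs_re_le_norm (s - 1))).1
  rw [Complex.sub_re, Complex.one_re] at hre
  have hσ : 1 - s.re ≤ 1 / (2 * Real.log q) := by linarith
  have hnorm : ‖s‖ ≤ 3 / 2 := by
    have h := norm_add_le (s - 1) 1
    rw [sub_add_cancel, norm_one] at h
    linarith
  have hsum : ∑ n ∈ Finset.range q, ((n + 1 : ℕ) : ℝ) ^ (-s.re) ≤ 2 * (1 + Real.log q) := by
    refine le_trans ?_ (mul_le_mul_of_nonneg_left (sum_range_inv_le_one_add_log q) zero_le_two)
    rw [Finset.mul_sum]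
    refine Finset.sum_le_sum fun n hn => ?_
    rw [show -s.re = (1 - s.re) + -1 by ring, Real.rpow_add (by positivity), Real.rpow_neg_one]
    gcongr
    exact rpow_one_sub_le_two (by simp) (by exact_mod_cast Finset.mem_range.mp hn) hL hσ
  have htail : (q : ℝ) ^ (1 - s.re) / s.re ≤ 2 / (1 / 2) := by
    gcongr
    · exact rpow_one_sub_le_two (by exact_mod_cast NeZero.one_le) le_rfl hL hσ
    · linarith
  have hre0 : 0 < s.re := by linarith
  calc ‖DirichletCharacter.LFunction χ s‖
      ≤ ‖s‖ * (∑ n ∈ Finset.range q, ((n + 1 : ℕ) : ℝ) ^ (-s.re) + (q : ℝ) ^ (1 - s.re) / s.re) :=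
        norm_LFunction_le_sum hχ hre0
    _ ≤ 3 / 2 * (2 * (1 + Real.log q) + 2 / (1 / 2)) := by gcongr
    _ ≤ 16 * Real.log q := by linarith

lemma norm_deriv_LFunction_le [NeZero q] (hq : 3 ≤ q) (hχ : χ ≠ 1) {s : ℂ}
    (hs : ‖s - 1‖ ≤ 1 / (4 * Real.log q)) :
    ‖deriv (DirichletCharacter.LFunction χ) s‖ ≤ 64 * Real.log q ^ 2 := by
  have hL := one_le_log_natCast hq
  have hsphere : ∀ z ∈ Metric.sphere s (1 / (4 * Real.log q)),
      ‖DirichletCharacter.LFunction χ z‖ ≤ 16 * Real.log q := fun z hz => by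
    refine norm_LFunction_le hq hχ ?_
    calc ‖z - 1‖ ≤ ‖z - s‖ + ‖s - 1‖ := norm_sub_le_norm_sub_add_norm_sub z s 1
      _ ≤ 1 / (4 * Real.log q) + 1 / (4 * Real.log q) := by
        rw [mem_sphere_iff_norm.mp hz]
        gcongr
      _ = 1 / (2 * Real.log q) := by
        field_simp
        norm_num
  refine (Complex.norm_deriv_le_of_forall_mem_sphere_norm_le (by positivity)
    (DirichletCharacter.differentiable_LFunction hχ).diffContOnCl hsphere).trans (le_of_eq ?_)
  field_simp
  norm_num

lemma norm_LFunction_le_of_one_lt_re [NeZero q] (χ : DirichletCharacter ℂ q) {s : ℂ}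
    (hs : 1 < s.re) : ‖DirichletCharacter.LFunction χ s‖ ≤ 1 + 1 / (s.re - 1) := by
  have hx : 0 < s.re - 1 := sub_pos.mpr hs
  have hseries := (hasSum_nat_add_iff' 1).mpr (ZMod.LSeriesSummable_of_one_lt_re χ hs).hasSum
  rw [Finset.sum_range_one, LSeries.term_zero, sub_zero] at hseries
  rw [DirichletCharacter.LFunction_eq_LSeries χ hs, LSeries, ← hseries.tsum_eq]
  refine (tsum_of_norm_bounded (summable_rpow_succ hx).hasSum fun n => ?_).trans
    (tsum_rpow_succ_le hx)
  rw [LSeries.term_of_ne_zero n.succ_ne_zero, norm_div, Complex.norm_natCast_cpow_of_pos n.succ_pos,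
    add_sub_cancel, Real.rpow_neg (by positivity), div_eq_mul_inv]
  exact mul_le_of_le_one_left (by positivity) (χ.norm_le_one _)

/-- The radius `x = 2⁻⁴⁰ (log q)⁻⁹` of a disc around `1` in which `L(s, χ)` does not vanish for
complex `χ mod q`. It is the size at which the `3-4-1` inequality at `1 + x` beats the Lipschitz
constant `64 (log q)²` of `L(s, χ)` on the disc. -/
noncomputable def zeroFreeRadius (q : ℕ) : ℝ := 1 / (2 ^ 40 * Real.log q ^ 9)

lemma zeroFreeRadius_pos (hq : 3 ≤ q) : 0 < zeroFreeRadius q := by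
  have hL := one_le_log_natCast hq
  rw [zeroFreeRadius]
  positivity

lemma zeroFreeRadius_le_one_div_log (hq : 3 ≤ q) :
    zeroFreeRadius q ≤ 1 / (2 ^ 40 * Real.log q) := by
  have hL := one_le_log_natCast hq
  rw [zeroFreeRadius]
  gcongr
  exact le_self_pow₀ hL (by norm_num)

lemma zeroFreeRadius_le (hq : 3 ≤ q) : zeroFreeRadius q ≤ 1 / 2 ^ 40 := by
  have hL := one_le_log_natCast hq
  exact (zeroFreeRadius_le_one_div_log hq).trans
    (by gcongr; exact le_mul_of_one_le_right (by norm_num) hL)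

variable [NeZero q]

lemma le_norm_LFunction_one_add_zeroFreeRadius (hq : 3 ≤ q) (hχ : χ ^ 2 ≠ 1) :
    256 * Real.log q ^ 2 * zeroFreeRadius q ≤
      ‖DirichletCharacter.LFunction χ (1 + zeroFreeRadius q)‖ := by
  have hL := one_le_log_natCast hq
  have hx := zeroFreeRadius_pos hq
  have hx1 := zeroFreeRadius_le hq
  have hxL := zeroFreeRadius_le_one_div_log hq
  have hxdef : zeroFreeRadius q * (2 ^ 40 * Real.log q ^ 9) = 1 := by
    rw [zeroFreeRadius]
    field_simp
  set L := Real.log q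
  set x := zeroFreeRadius q
  have h341 := DirichletCharacter.norm_LFunction_product_ge_one χ hx 0
  simp only [Complex.ofReal_zero, mul_zero, add_zero, norm_mul, norm_pow] at h341
  have htriv : ‖DirichletCharacter.LFunctionTrivChar q (1 + x)‖ ≤ 2 / x := by
    refine (norm_LFunction_le_of_one_lt_re 1 (by simpa using hx)).trans ?_
    simp only [Complex.add_re, Complex.one_re, Complex.ofReal_re, add_sub_cancel_left]
    rw [← sub_nonneg, show 2 / x - (1 + 1 / x) = (1 - x) / x by field_simp; ring]
    exact div_nonneg (by linarith) hx.le
  have hsq : ‖DirichletCharacter.LFunction (χ ^ 2) (1 + x)‖ ≤ 16 * L := by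
    refine norm_LFunction_le hq hχ ?_
    rw [add_sub_cancel_left, Complex.norm_real, Real.norm_of_nonneg hx.le]
    exact hxL.trans (by gcongr; norm_num)
  by_contra! hlt
  have hcontra : (1 : ℝ) ≤ (2 / x) ^ 3 * (256 * L ^ 2 * x) ^ 4 * (16 * L) :=
    h341.le.trans (by gcongr)
  have hvalue : (2 / x) ^ 3 * (256 * L ^ 2 * x) ^ 4 * (16 * L) = x * (2 ^ 40 * L ^ 9) / 2 := by
    field_simp
    norm_num
  rw [hvalue, hxdef] at hcontra
  norm_num at hcontra

lemma le_norm_LFunction_of_sq_ne_one (hq : 3 ≤ q) (hχ : χ ^ 2 ≠ 1) {s : ℂ}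
    (hs : ‖s - 1‖ ≤ zeroFreeRadius q) :
    128 * Real.log q ^ 2 * zeroFreeRadius q ≤ ‖DirichletCharacter.LFunction χ s‖ := by
  have hχ1 : χ ≠ 1 := fun h => hχ (by rw [h, one_pow])
  have hL := one_le_log_natCast hq
  have hx := zeroFreeRadius_pos hq
  have hcenter := le_norm_LFunction_one_add_zeroFreeRadius hq hχ
  have hxL : zeroFreeRadius q ≤ 1 / (4 * Real.log q) :=
    (zeroFreeRadius_le_one_div_log hq).trans (by gcongr; norm_num)
  set x := zeroFreeRadius q
  have hmem : ‖(1 + x : ℂ) - 1‖ = x := by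
    rw [add_sub_cancel_left, Complex.norm_real, Real.norm_of_nonneg hx.le]
  have hdiff : ‖DirichletCharacter.LFunction χ (1 + x) - DirichletCharacter.LFunction χ s‖ ≤
      64 * Real.log q ^ 2 * ‖(1 + x : ℂ) - s‖ :=
    Convex.norm_image_sub_le_of_norm_deriv_le (s := Metric.closedBall (1 : ℂ) x)
      (fun z _ => DirichletCharacter.differentiable_LFunction hχ1 z)
      (fun z hz => norm_deriv_LFunction_le hq hχ1 ((mem_closedBall_iff_norm.mp hz).trans hxL))
      (convex_closedBall _ _) (mem_closedBall_iff_norm.mpr hs) (mem_closedBall_iff_norm.mpr hmem.le)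
  have hdist : ‖(1 + x : ℂ) - s‖ ≤ 2 * x := by
    have h := norm_sub_le_norm_sub_add_norm_sub (1 + x : ℂ) 1 s
    rw [hmem, norm_sub_rev 1 s] at h
    linarith
  have hlip : 64 * Real.log q ^ 2 * ‖(1 + x : ℂ) - s‖ ≤ 64 * Real.log q ^ 2 * (2 * x) := by gcongr
  linarith [norm_sub_norm_le (DirichletCharacter.LFunction χ (1 + x))
    (DirichletCharacter.LFunction χ s)]

lemma LFunction_ne_zero_of_sq_ne_one (hq : 3 ≤ q) (hχ : χ ^ 2 ≠ 1) {s : ℂ}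
    (hs : ‖s - 1‖ ≤ zeroFreeRadius q) : DirichletCharacter.LFunction χ s ≠ 0 := by
  have hL := one_le_log_natCast hq
  have hx := zeroFreeRadius_pos hq
  exact norm_pos_iff.mp
    ((by positivity : (0 : ℝ) < _).trans_le (le_norm_LFunction_of_sq_ne_one hq hχ hs))

lemma norm_logDeriv_LFunction_le_of_sq_ne_one (hq : 3 ≤ q) (hχ : χ ^ 2 ≠ 1) {s : ℂ}
    (hs : ‖s - 1‖ ≤ zeroFreeRadius q) :
    ‖logDeriv (DirichletCharacter.LFunction χ) s‖ ≤ 1 / (2 * zeroFreeRadius q) := by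
  have hχ1 : χ ≠ 1 := fun h => hχ (by rw [h, one_pow])
  have hL := one_le_log_natCast hq
  have hx := zeroFreeRadius_pos hq
  have hs4 : ‖s - 1‖ ≤ 1 / (4 * Real.log q) :=
    (hs.trans (zeroFreeRadius_le_one_div_log hq)).trans (by gcongr; norm_num)
  rw [logDeriv_apply, norm_div]
  calc ‖deriv (DirichletCharacter.LFunction χ) s‖ / ‖DirichletCharacter.LFunction χ s‖
      ≤ 64 * Real.log q ^ 2 / (128 * Real.log q ^ 2 * zeroFreeRadius q) := by
        gcongr
        · exact norm_deriv_LFunction_le hq hχ1 hs4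
        · exact le_norm_LFunction_of_sq_ne_one hq hχ hs
    _ = 1 / (2 * zeroFreeRadius q) := by
        field_simp
        norm_num

end NearOne

/-! ### Forward differences of holomorphic functions -/

section FwdDiff

open scoped fwdDiff

variable {E : Type*} [NormedAddCommGroup E] [NormedSpace ℂ E] {f : ℂ → E} {c δ : ℂ} {R M ρ : ℝ}

lemma differentiableOn_fwdDiff_ball (hδ : ‖δ‖ ≤ ρ) (hf : DifferentiableOn ℂ f (Metric.ball c R)) :
    DifferentiableOn ℂ (Δ_[δ] f) (Metric.ball c (R - ρ)) := by
  have hshift : ∀ z ∈ Metric.ball c (R - ρ), z + δ ∈ Metric.ball c R := fun z hz => by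
    rw [mem_ball_iff_norm] at hz ⊢
    rw [add_sub_right_comm]
    linarith [norm_add_le (z - c) δ]
  refine (hf.comp (by fun_prop) hshift).sub (hf.mono (Metric.ball_subset_ball ?_))
  linarith [norm_nonneg δ]

lemma norm_fwdDiff_le_of_ball (hρ : 0 < ρ) (hδ : ‖δ‖ ≤ ρ)
    (hf : DifferentiableOn ℂ f (Metric.ball c R)) (hM : ∀ z ∈ Metric.ball c R, ‖f z‖ ≤ M) :
    ∀ z ∈ Metric.ball c (R - 2 * ρ), ‖Δ_[δ] f z‖ ≤ M * (‖δ‖ / ρ) := by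
  have hclosedBall : ∀ w ∈ Metric.ball c (R - ρ), Metric.closedBall w ρ ⊆ Metric.ball c R :=
    fun w hw => Metric.closedBall_subset_ball' (by linarith [Metric.mem_ball.mp hw])
  have hderiv : ∀ w ∈ Metric.ball c (R - ρ), ‖deriv f w‖ ≤ M / ρ := fun w hw => by
    refine Complex.norm_deriv_le_of_forall_mem_sphere_norm_le hρ ?_
      fun u hu => hM u (hclosedBall w hw (Metric.sphere_subset_closedBall hu))
    refine (hf.mono ?_).diffContOnCl
    rw [closure_ball _ hρ.ne']
    exact hclosedBall w hw
  intro z hz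
  rw [mem_ball_iff_norm] at hz
  have hz' : z ∈ Metric.ball c (R - ρ) := mem_ball_iff_norm.mpr (by linarith)
  have hzδ : z + δ ∈ Metric.ball c (R - ρ) := by
    rw [mem_ball_iff_norm, add_sub_right_comm]
    linarith [norm_add_le (z - c) δ]
  have h := Convex.norm_image_sub_le_of_norm_deriv_le
    (fun w hw => hf.differentiableAt (Metric.isOpen_ball.mem_nhds
      (Metric.ball_subset_ball (by linarith) hw))) hderiv (convex_ball c _) hz' hzδ
  rwa [add_sub_cancel_left, mul_comm_div] at h

lemma norm_fwdDiff_iter_le_of_ball (hρ : 0 < ρ) (hδ : ‖δ‖ ≤ ρ) (n : ℕ)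
    (hf : DifferentiableOn ℂ f (Metric.ball c R)) (hM : ∀ z ∈ Metric.ball c R, ‖f z‖ ≤ M) :
    ∀ z ∈ Metric.ball c (R - 2 * n * ρ), ‖(Δ_[δ])^[n] f z‖ ≤ M * (‖δ‖ / ρ) ^ n := by
  induction n generalizing f R M with
  | zero => simpa using hM
  | succ n ih =>
    have hsub : Metric.ball c (R - 2 * ρ) ⊆ Metric.ball c (R - ρ) :=
      Metric.ball_subset_ball (by linarith)
    have h := ih ((differentiableOn_fwdDiff_ball hδ hf).mono hsub)
      (norm_fwdDiff_le_of_ball hρ hδ hf hM)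
    intro z hz
    rw [pow_succ', ← mul_assoc]
    exact h z (by convert hz using 2; push_cast; ring)

end FwdDiff

/-! ### The kernel `1 / t - 1 / (exp t - 1)` -/

/-- **Lazarević's inequality.** -/
lemma pow_three_mul_cosh_le_sinh_pow_three {x : ℝ} (hx : 0 ≤ x) :
    x ^ 3 * Real.cosh x ≤ Real.sinh x ^ 3 := by
  set c : ℝ → ℝ := fun u => Real.cosh u ^ (1 / 3 : ℝ) with hc
  have hc0 (u : ℝ) : 0 < c u := Real.rpow_pos_of_pos (Real.cosh_pos u) _
  have hc3 (u : ℝ) : c u ^ 3 = Real.cosh u := by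
    rw [hc, ← Real.rpow_natCast, ← Real.rpow_mul (Real.cosh_pos u).le]
    norm_num
  have hcderiv (u : ℝ) : HasDerivAt c (Real.sinh u / (3 * c u ^ 2)) u := by
    have hpow : Real.cosh u ^ (1 / 3 - 1 : ℝ) = (c u ^ 2)⁻¹ := by
      rw [hc, ← Real.rpow_natCast, ← Real.rpow_mul (Real.cosh_pos u).le,
        ← Real.rpow_neg (Real.cosh_pos u).le]
      norm_num
    refine ((Real.hasDerivAt_cosh u).rpow_const (Or.inl (Real.cosh_pos u).ne')).congr_deriv ?_
    rw [hpow]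
    ring
  -- With `c = cosh ^ (1/3)` the derivative of `sinh / c - id` is `(c² - 1)² (2c² + 1) / (3 c⁴)`.
  have hderiv (u : ℝ) : HasDerivAt (fun u => Real.sinh u / c u - u)
      ((c u ^ 2 - 1) ^ 2 * (2 * c u ^ 2 + 1) / (3 * c u ^ 4)) u := by
    have hsinh : Real.sinh u ^ 2 = c u ^ 6 - 1 := by
      rw [Real.sinh_sq, ← hc3 u]; ring
    refine (((Real.hasDerivAt_sinh u).div (hcderiv u) (hc0 u).ne').sub
      (hasDerivAt_id u)).congr_deriv ?_
    have := (hc0 u).ne'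
    rw [← hc3 u]
    field_simp
    rw [hsinh]
    ring
  have hmono : Monotone fun u => Real.sinh u / c u - u :=
    monotone_of_hasDerivAt_nonneg hderiv fun u => by positivity
  have hx_le : x ≤ Real.sinh x / c x := by simpa using hmono hx
  rw [le_div_iff₀ (hc0 x)] at hx_le
  calc x ^ 3 * Real.cosh x = (x * c x) ^ 3 := by rw [mul_pow, hc3]
    _ ≤ Real.sinh x ^ 3 := by have := hc0 x; gcongr

/-- The function `t ↦ 1 / t - 1 / (exp t - 1)`: weighting a character sum by `1 / (exp (n t) - 1)`
instead of `1 / (n t)` changes it by a sum weighted by this kernel. -/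
noncomputable def lambertKernel (t : ℝ) : ℝ := 1 / t - 1 / (Real.exp t - 1)

lemma exp_sub_one_pos {t : ℝ} (ht : 0 < t) : 0 < Real.exp t - 1 :=
  sub_pos.mpr (Real.one_lt_exp_iff.mpr ht)

lemma hasDerivAt_lambertKernel {t : ℝ} (ht : 0 < t) :
    HasDerivAt lambertKernel (Real.exp t / (Real.exp t - 1) ^ 2 - 1 / t ^ 2) t := by
  have hexp := exp_sub_one_pos ht
  refine (((hasDerivAt_const t 1).div (hasDerivAt_id t) ht.ne').sub ((hasDerivAt_const t 1).div
    ((Real.hasDerivAt_exp t).sub_const 1) hexp.ne')).congr_deriv ?_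
  simp only [id]
  ring

lemma hasDerivAt_deriv_lambertKernel {t : ℝ} (ht : 0 < t) :
    HasDerivAt (fun t => Real.exp t / (Real.exp t - 1) ^ 2 - 1 / t ^ 2)
      (2 / t ^ 3 - Real.exp t * (Real.exp t + 1) / (Real.exp t - 1) ^ 3) t := by
  have hexp := exp_sub_one_pos ht
  refine (((Real.hasDerivAt_exp t).div (((Real.hasDerivAt_exp t).sub_const 1).pow 2)
    (pow_ne_zero 2 hexp.ne')).sub ((hasDerivAt_const t 1).div (hasDerivAt_pow 2 t)
    (pow_ne_zero 2 ht.ne'))).congr_deriv ?_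
  simp only [Pi.pow_apply]
  field_simp
  ring

lemma deriv2_lambertKernel_nonneg {t : ℝ} (ht : 0 < t) :
    0 ≤ 2 / t ^ 3 - Real.exp t * (Real.exp t + 1) / (Real.exp t - 1) ^ 3 := by
  obtain ⟨x, rfl⟩ : ∃ x, t = 2 * x := ⟨t / 2, by ring⟩
  have hx : 0 < x := by linarith
  have : 0 < Real.sinh x := Real.sinh_pos_iff.mpr hx
  have hexp_sub : Real.exp (2 * x) - 1 = 2 * Real.exp x * Real.sinh x := by
    rw [Real.sinh_eq, Real.exp_neg, two_mul, Real.exp_add]; field_simp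
  have hexp_add : Real.exp (2 * x) + 1 = 2 * Real.exp x * Real.cosh x := by
    rw [Real.cosh_eq, Real.exp_neg, two_mul, Real.exp_add]; field_simp
  have heq : Real.exp (2 * x) * (Real.exp (2 * x) + 1) / (Real.exp (2 * x) - 1) ^ 3 =
      Real.cosh x / (4 * Real.sinh x ^ 3) := by
    rw [hexp_add, hexp_sub, two_mul x, Real.exp_add]; field_simp; norm_num
  rw [heq, sub_nonneg, div_le_div_iff₀ (by positivity) (by positivity)]
  linarith [pow_three_mul_cosh_le_sinh_pow_three hx.le]

lemma convexOn_lambertKernel : ConvexOn ℝ (Set.Ioi 0) lambertKernel := by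
  refine convexOn_of_hasDerivWithinAt2_nonneg (convex_Ioi 0)
    (f' := fun t => Real.exp t / (Real.exp t - 1) ^ 2 - 1 / t ^ 2)
    (f'' := fun t => 2 / t ^ 3 - Real.exp t * (Real.exp t + 1) / (Real.exp t - 1) ^ 3)
    (fun t ht => (hasDerivAt_lambertKernel ht).continuousAt.continuousWithinAt) ?_ ?_ ?_ <;>
  rw [interior_Ioi] <;> intro t ht
  · exact (hasDerivAt_lambertKernel ht).hasDerivWithinAt
  · exact (hasDerivAt_deriv_lambertKernel ht).hasDerivWithinAt
  · exact deriv2_lambertKernel_nonneg ht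

lemma lambertKernel_le_half {t : ℝ} (ht : 0 < t) : lambertKernel t ≤ 1 / 2 := by
  have hexp := exp_sub_one_pos ht
  suffices h : (2 - t) * (Real.exp t - 1) ≤ 2 * t by
    rw [lambertKernel, div_sub_div _ _ ht.ne' hexp.ne', div_le_div_iff₀ (by positivity) two_pos]
    linarith
  have hmono : Antitone fun u : ℝ => (2 - u) * Real.exp u - u := by
    refine antitone_of_hasDerivAt_nonpos (f' := fun u => (1 - u) * Real.exp u - 1) (fun u => ?_)
      fun u => sub_nonpos.mpr ?_
    · refine ((((hasDerivAt_id u).const_sub 2).mul (Real.hasDerivAt_exp u)).sub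
        (hasDerivAt_id u)).congr_deriv ?_
      simp only [id]
      ring
    · have h := mul_le_mul_of_nonneg_right (Real.add_one_le_exp (-u)) (Real.exp_pos u).le
      rw [← Real.exp_add] at h
      rw [neg_add_cancel, Real.exp_zero] at h
      linarith
  have := hmono ht.le
  simp only [sub_zero, Real.exp_zero, mul_one] at this
  linarith

lemma one_div_two_add_le_lambertKernel {t : ℝ} (ht : 0 < t) : 1 / (2 + t) ≤ lambertKernel t := by
  have hquad : t + t ^ 2 / 2 ≤ Real.exp t - 1 := by
    linarith [Real.quadratic_le_exp_of_nonneg ht.le]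
  calc 1 / (2 + t) = 1 / t - 1 / (t + t ^ 2 / 2) := by field_simp; ring
    _ ≤ lambertKernel t := by rw [lambertKernel]; gcongr

lemma lambertKernel_le_one_div {t : ℝ} (ht : 0 < t) : lambertKernel t ≤ 1 / t :=
  sub_le_self _ (one_div_pos.mpr (exp_sub_one_pos ht)).le

lemma lambertKernel_two_mul_le {t : ℝ} (ht : 0 < t) : lambertKernel (2 * t) ≤ lambertKernel t := by
  have hsinh : t ≤ Real.sinh t := Real.self_le_sinh_iff.mpr ht.le
  have heq : lambertKernel t - lambertKernel (2 * t) = 1 / (2 * t) - 1 / (2 * Real.sinh t) := by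
    have hexp := (exp_sub_one_pos ht).ne'
    have hexp_two : Real.exp t ^ 2 - 1 ≠ 0 := by
      rw [← Real.exp_nat_mul]
      exact (exp_sub_one_pos (by positivity)).ne'
    rw [lambertKernel, lambertKernel, Real.sinh_eq, Real.exp_neg, two_mul, Real.exp_add, ← sq]
    field_simp
    ring
  rw [← sub_nonneg, heq, sub_nonneg]
  gcongr

lemma lambertKernel_sub_le {t : ℝ} (ht : 0 < t) :
    lambertKernel t - lambertKernel (2 * t) ≤ t / 2 := by
  have hupper := lambertKernel_le_half ht
  have hlower := one_div_two_add_le_lambertKernel (by positivity : 0 < 2 * t)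
  have : 1 / 2 - 1 / (2 + 2 * t) ≤ t / 2 := by
    rw [div_sub_div _ _ two_ne_zero (by positivity), div_le_div_iff₀ (by positivity) two_pos]
    nlinarith [mul_pos ht ht]
  linarith

lemma tendsto_lambertKernel_mul {t : ℝ} (ht : 0 < t) :
    Tendsto (fun n : ℕ => lambertKernel ((n + 1 : ℕ) * t)) atTop (𝓝 0) := by
  have hlim : Tendsto (fun n : ℕ => 1 / (((n + 1 : ℕ) : ℝ) * t)) atTop (𝓝 0) := by
    simpa [mul_comm] using (tendsto_one_div_add_atTop_nhds_zero_nat (𝕜 := ℝ)).mul_const (1 / t)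
  refine squeeze_zero (fun n => ?_) (fun n => ?_) hlim
  · exact (by positivity : (0 : ℝ) ≤ 1 / (2 + (n + 1 : ℕ) * t)).trans
      (one_div_two_add_le_lambertKernel (by positivity))
  · exact lambertKernel_le_one_div (by positivity)

/-! ### Lambert series -/

lemma norm_sum_mul_le_of_antitone {a : ℕ → ℂ} {B : ℝ} {w : ℕ → ℝ}
    (ha : ∀ n, ‖∑ i ∈ Finset.range n, a i‖ ≤ B) (hw : Antitone w) (hw0 : ∀ n, 0 ≤ w n) (N : ℕ) :
    ‖∑ n ∈ Finset.range N, a n * w n‖ ≤ B * w 0 := by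
  rw [sum_mul_eq_sum_partialSum_mul_sub]
  calc _ ≤ ‖(∑ i ∈ Finset.range N, a i) * (w N : ℂ)‖ + ∑ n ∈ Finset.range N,
        ‖(∑ i ∈ Finset.range (n + 1), a i) * ((w n : ℂ) - w (n + 1))‖ :=
        (norm_add_le _ _).trans (add_le_add_right (norm_sum_le _ _) _)
    _ ≤ B * w N + ∑ n ∈ Finset.range N, B * (w n - w (n + 1)) := by
        refine add_le_add ?_ (Finset.sum_le_sum fun n _ => ?_)
        · rw [norm_mul, Complex.norm_of_nonneg (hw0 N)]
          exact mul_le_mul_of_nonneg_right (ha N) (hw0 N)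
        · have hsub : 0 ≤ w n - w (n + 1) := sub_nonneg.mpr (hw n.le_succ)
          rw [norm_mul, ← Complex.ofReal_sub, Complex.norm_of_nonneg hsub]
          exact mul_le_mul_of_nonneg_right (ha (n + 1)) hsub
    _ = B * w 0 := by rw [← Finset.mul_sum, Finset.sum_range_sub']; ring

/-- Two partial summations: the partial sums of `a` equal `M` up to an error with bounded sums. -/
lemma norm_sub_mul_le_of_convex {a : ℕ → ℂ} {g : ℕ → ℝ} {s M : ℂ} {B : ℝ}
    (hM : ∀ n, ‖∑ m ∈ Finset.range n, (∑ i ∈ Finset.range (m + 1), a i - M)‖ ≤ B)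
    (hconvex : Antitone fun n => g n - g (n + 1)) (hg : Tendsto g atTop (𝓝 0))
    (hs : Tendsto (fun N => ∑ n ∈ Finset.range N, a n * (g n : ℂ)) atTop (𝓝 s)) :
    ‖s - M * g 0‖ ≤ B * (g 0 - g 1) := by
  set A : ℕ → ℂ := fun n => ∑ i ∈ Finset.range n, a i
  have hA (N : ℕ) : ‖A (N + 1) - M‖ ≤ 2 * B := by
    have h := norm_sub_le_of_le (hM (N + 1)) (hM N)
    rwa [Finset.sum_range_succ_sub_sum, ← two_mul] at h
  have hnonneg : ∀ n, 0 ≤ g n - g (n + 1) := hconvex.le_of_tendsto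
    (by simpa using hg.sub (hg.comp (tendsto_add_atTop_nat 1)))
  have hpartial (N : ℕ) : ∑ n ∈ Finset.range N, a n * (g n : ℂ) - M * g 0 = (A N - M) * g N +
      ∑ n ∈ Finset.range N, (A (n + 1) - M) * ((g n - g (n + 1) : ℝ) : ℂ) := by
    simp only [sub_mul, Finset.sum_sub_distrib, ← Finset.mul_sum, Complex.ofReal_sub,
      Finset.sum_range_sub' fun n => (g n : ℂ), sum_mul_eq_sum_partialSum_mul_sub a, A]
    ring
  have hbound (N : ℕ) : ‖∑ n ∈ Finset.range (N + 1), a n * (g n : ℂ) - M * g 0‖ ≤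
      2 * B * |g (N + 1)| + B * (g 0 - g 1) := by
    rw [hpartial]
    refine norm_add_le_of_le ?_ (norm_sum_mul_le_of_antitone hM hconvex hnonneg _)
    rw [norm_mul, Complex.norm_real, Real.norm_eq_abs]
    exact mul_le_mul_of_nonneg_right (hA N) (abs_nonneg _)
  have hlim : Tendsto (fun N => 2 * B * |g (N + 1)| + B * (g 0 - g 1)) atTop
      (𝓝 (B * (g 0 - g 1))) := by
    simpa using ((hg.comp (tendsto_add_atTop_nat 1)).abs.const_mul (2 * B)).add_const
      (B * (g 0 - g 1))
  exact le_of_tendsto_of_tendsto' ((hs.comp (tendsto_add_atTop_nat 1)).sub_const _).norm hlim hbound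

section LambertSeries

variable {q : ℕ} {χ : DirichletCharacter ℂ q}

/-- The Lambert series `∑ χ(n) / (exp (n t) - 1)`, which is also the exponentially weighted sum
of the divisor sums `∑_{d ∣ n} χ(d)`. -/
noncomputable def lambertSeries (χ : DirichletCharacter ℂ q) (t : ℝ) : ℂ :=
  ∑' n : ℕ, χ ((n + 1 : ℕ) : ZMod q) * ((1 / (Real.exp ((n + 1 : ℕ) * t) - 1) : ℝ) : ℂ)

lemma summable_lambertSeries (χ : DirichletCharacter ℂ q) {t : ℝ} (ht : 0 < t) :
    Summable fun n : ℕ =>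
      χ ((n + 1 : ℕ) : ZMod q) * ((1 / (Real.exp ((n + 1 : ℕ) * t) - 1) : ℝ) : ℂ) := by
  have hsq : Summable fun n : ℕ => 2 / t ^ 2 * (((n + 1 : ℕ) : ℝ) ^ 2)⁻¹ :=
    (((summable_nat_add_iff 1).mpr (Real.summable_nat_pow_inv.mpr one_lt_two))).mul_left _
  refine Summable.of_norm_bounded hsq fun n => ?_
  set x := ((n + 1 : ℕ) : ℝ) * t with hx
  have hx0 : 0 < x := by positivity
  have hexp : x ^ 2 / 2 ≤ Real.exp x - 1 := by
    linarith [Real.quadratic_le_exp_of_nonneg hx0.le]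
  rw [norm_mul, Complex.norm_of_nonneg (one_div_pos.mpr (exp_sub_one_pos hx0)).le]
  calc ‖χ ((n + 1 : ℕ) : ZMod q)‖ * (1 / (Real.exp x - 1))
      ≤ 1 * (1 / (x ^ 2 / 2)) := by
        have := (exp_sub_one_pos hx0).le
        gcongr
        exact χ.norm_le_one _
    _ = 2 / t ^ 2 * (((n + 1 : ℕ) : ℝ) ^ 2)⁻¹ := by rw [hx]; field_simp

lemma tendsto_sum_char_mul_lambertKernel [NeZero q] (hχ : χ ≠ 1) {t : ℝ} (ht : 0 < t) :
    Tendsto (fun N => ∑ n ∈ Finset.range N,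
      χ ((n + 1 : ℕ) : ZMod q) * (lambertKernel ((n + 1 : ℕ) * t) : ℂ)) atTop
      (𝓝 (χ.LFunction 1 / t - lambertSeries χ t)) := by
  refine (((tendsto_sum_char_mul_inv hχ).div_const (t : ℂ)).sub
    (summable_lambertSeries χ ht).hasSum.tendsto_sum_nat).congr fun N => ?_
  rw [Finset.sum_div, ← Finset.sum_sub_distrib]
  refine Finset.sum_congr rfl fun n _ => ?_
  rw [lambertKernel, Complex.ofReal_sub, mul_sub]
  push_cast
  field_simp

lemma norm_LFunction_div_sub_lambertSeries_sub_le [NeZero q] (hχ : χ ≠ 1) {M : ℂ} {B : ℝ}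
    (hM : ∀ n, ‖∑ m ∈ Finset.range n, (charSum χ (m + 1) - M)‖ ≤ B) {t : ℝ} (ht : 0 < t) :
    ‖χ.LFunction 1 / t - lambertSeries χ t - M * lambertKernel t‖ ≤ B * (t / 2) := by
  have hconvex : Antitone fun n : ℕ =>
      lambertKernel ((n + 1 : ℕ) * t) - lambertKernel ((n + 1 + 1 : ℕ) * t) := by
    refine antitone_nat_of_succ_le fun n => ?_
    have hpos (m : ℕ) : ((m + 1 : ℕ) : ℝ) * t ∈ Set.Ioi 0 := by
      simp only [Set.mem_Ioi]; positivity
    have h := convexOn_lambertKernel.2 (hpos n) (hpos (n + 1 + 1)) one_half_pos.le one_half_pos.le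
      (add_halves 1)
    rw [show (1 / 2 : ℝ) • (((n + 1 : ℕ) : ℝ) * t) + (1 / 2 : ℝ) • (((n + 1 + 1 + 1 : ℕ) : ℝ) * t) =
      ((n + 1 + 1 : ℕ) : ℝ) * t by push_cast; simp only [smul_eq_mul]; ring] at h
    simp only [smul_eq_mul] at h
    linarith
  have hB : 0 ≤ B := by simpa using hM 0
  have h := norm_sub_mul_le_of_convex hM hconvex (tendsto_lambertKernel_mul ht)
    (tendsto_sum_char_mul_lambertKernel hχ ht)
  norm_num at h
  exact h.trans (mul_le_mul_of_nonneg_left (lambertKernel_sub_le ht) hB)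

lemma norm_lambertSeries_sub_sub_le [NeZero q] (hχ : χ ≠ 1) {M : ℂ} {B : ℝ} (hMB : ‖M‖ ≤ B)
    (hM : ∀ n, ‖∑ m ∈ Finset.range n, (charSum χ (m + 1) - M)‖ ≤ B) {t : ℝ} (ht : 0 < t) :
    ‖lambertSeries χ t - lambertSeries χ (2 * t) - χ.LFunction 1 / (2 * t)‖ ≤ 2 * B * t := by
  set err : ℝ → ℂ := fun u => χ.LFunction 1 / u - lambertSeries χ u - M * lambertKernel u
  have hkernel : ‖M * ((lambertKernel t - lambertKernel (2 * t) : ℝ) : ℂ)‖ ≤ B * (t / 2) := by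
    have hanti := sub_nonneg.mpr (lambertKernel_two_mul_le ht)
    rw [norm_mul, Complex.norm_of_nonneg hanti]
    exact mul_le_mul hMB (lambertKernel_sub_le ht) hanti ((norm_nonneg M).trans hMB)
  have heq : lambertSeries χ t - lambertSeries χ (2 * t) - χ.LFunction 1 / (2 * t) =
      err (2 * t) - err t - M * ((lambertKernel t - lambertKernel (2 * t) : ℝ) : ℂ) := by
    have : (t : ℂ) ≠ 0 := by exact_mod_cast ht.ne'
    simp only [err]
    push_cast
    field_simp
    ring
  have h₁ := norm_LFunction_div_sub_lambertSeries_sub_le hχ hM ht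
  have h₂ := norm_LFunction_div_sub_lambertSeries_sub_le hχ hM (by positivity : 0 < 2 * t)
  rw [heq]
  calc _ ≤ B * (2 * t / 2) + B * (t / 2) + B * (t / 2) :=
        norm_sub_le_of_le (norm_sub_le_of_le h₂ h₁) hkernel
    _ = 2 * B * t := by ring

end LambertSeries

/-! ### Gauss sums and the mean value of character sums -/

section StdAddChar

variable {q : ℕ} [NeZero q]

lemma le_norm_stdAddChar_natCast_sub_one {v : ℕ} (hv : 2 * v ≤ q) :
    4 * v / q ≤ ‖ZMod.stdAddChar (v : ZMod q) - 1‖ := by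
  have hq : (0 : ℝ) < q := by exact_mod_cast NeZero.pos q
  have hv' : (2 : ℝ) * v ≤ q := by exact_mod_cast hv
  have harg : (2 * Real.pi * Complex.I * v / q : ℂ) =
      Complex.I * ((2 * (Real.pi * v / q) : ℝ) : ℂ) := by push_cast; ring
  have hle : Real.pi * v / q ≤ Real.pi / 2 := by
    rw [div_le_div_iff₀ hq two_pos]
    nlinarith [Real.pi_pos]
  rw [ZMod.stdAddChar_apply, ZMod.toCircle_natCast, harg, Complex.norm_exp_I_mul_ofReal_sub_one,
    mul_div_cancel_left₀ _ two_ne_zero]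
  calc 4 * v / q = 2 * (2 / Real.pi * (Real.pi * v / q)) := by field_simp; ring
    _ ≤ 2 * Real.sin (Real.pi * v / q) := by
        gcongr
        exact Real.mul_le_sin (by positivity) hle
    _ ≤ ‖2 * Real.sin (Real.pi * v / q)‖ := Real.le_norm_self _

lemma norm_stdAddChar_neg_sub_one (a : ZMod q) :
    ‖ZMod.stdAddChar (-a) - 1‖ = ‖ZMod.stdAddChar a - 1‖ := by
  rw [AddChar.map_neg_eq_conj, ← Complex.norm_conj, map_sub, Complex.conj_conj, map_one]

lemma inv_norm_stdAddChar_natCast_sub_one_sq_le_of_two_mul_le {v : ℕ} (hv : 2 * v ≤ q) :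
    (‖ZMod.stdAddChar (v : ZMod q) - 1‖ ^ 2)⁻¹ ≤ (q : ℝ) ^ 2 / 16 * ((v : ℝ) ^ 2)⁻¹ := by
  rcases v.eq_zero_or_pos with rfl | hv0
  · simp
  have hq : (0 : ℝ) < q := by exact_mod_cast NeZero.pos q
  have : (0 : ℝ) < v := by exact_mod_cast hv0
  calc (‖ZMod.stdAddChar (v : ZMod q) - 1‖ ^ 2)⁻¹ ≤ ((4 * v / q : ℝ) ^ 2)⁻¹ := by
        gcongr; exact le_norm_stdAddChar_natCast_sub_one hv
    _ = (q : ℝ) ^ 2 / 16 * ((v : ℝ) ^ 2)⁻¹ := by field_simp; norm_num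

lemma inv_norm_stdAddChar_natCast_sub_one_sq_le {v : ℕ} (hv : v ≤ q) :
    (‖ZMod.stdAddChar (v : ZMod q) - 1‖ ^ 2)⁻¹ ≤
      (q : ℝ) ^ 2 / 16 * (((v : ℝ) ^ 2)⁻¹ + (((q - v : ℕ) : ℝ) ^ 2)⁻¹) := by
  rcases le_total (2 * v) q with h | h
  · refine (inv_norm_stdAddChar_natCast_sub_one_sq_le_of_two_mul_le h).trans ?_
    gcongr
    exact le_add_of_nonneg_right (by positivity)
  · have hneg : (v : ZMod q) = -((q - v : ℕ) : ZMod q) := by simp [Nat.cast_sub hv]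
    rw [hneg, norm_stdAddChar_neg_sub_one]
    refine (inv_norm_stdAddChar_natCast_sub_one_sq_le_of_two_mul_le (by lia)).trans ?_
    gcongr
    exact le_add_of_nonneg_left (by positivity)

lemma sum_inv_norm_stdAddChar_sub_one_sq_le :
    ∑ a : ZMod q, (‖ZMod.stdAddChar a - 1‖ ^ 2)⁻¹ ≤ (q : ℝ) ^ 2 / 4 := by
  have hsum : ∑ v ∈ Finset.range q, (((v + 1 : ℕ) : ℝ) ^ 2)⁻¹ ≤ 2 := by
    have h := sum_Ioo_inv_sq_le (α := ℝ) 0 (q + 1)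
    rw [← Finset.Ico_add_one_left_eq_Ioo, Finset.sum_Ico_eq_sum_range] at h
    simpa [add_comm] using h
  have hshift : ∑ v ∈ Finset.range q, ((v : ℝ) ^ 2)⁻¹ ≤ 2 := by
    refine le_trans ?_ hsum
    have h := Finset.sum_range_succ' (fun v : ℕ => ((v : ℝ) ^ 2)⁻¹) q
    rw [Finset.sum_range_succ] at h
    have : 0 ≤ ((q : ℝ) ^ 2)⁻¹ := by positivity
    simp only [Nat.cast_zero, ne_eq, two_ne_zero, not_false_eq_true, zero_pow, inv_zero] at h
    linarith
  have hreflect : ∑ v ∈ Finset.range q, (((q - v : ℕ) : ℝ) ^ 2)⁻¹ ≤ 2 := by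
    rw [← Finset.sum_range_reflect] at hsum
    refine le_of_eq_of_le (Finset.sum_congr rfl fun v hv => ?_) hsum
    rw [show q - 1 - v + 1 = q - v by have := Finset.mem_range.mp hv; lia]
  rw [← sum_range_natCast_zmod]
  calc _ ≤ ∑ v ∈ Finset.range q, (q : ℝ) ^ 2 / 16 *
        (((v : ℝ) ^ 2)⁻¹ + (((q - v : ℕ) : ℝ) ^ 2)⁻¹) := Finset.sum_le_sum fun v hv =>
        inv_norm_stdAddChar_natCast_sub_one_sq_le (Finset.mem_range.mp hv).le
    _ ≤ (q : ℝ) ^ 2 / 16 * (2 + 2) := by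
        rw [← Finset.mul_sum, Finset.sum_add_distrib]
        gcongr
    _ = (q : ℝ) ^ 2 / 4 := by ring

lemma stdAddChar_sub_one_ne_zero {a : ZMod q} (ha : a ≠ 0) : ZMod.stdAddChar a - 1 ≠ 0 :=
  sub_ne_zero.mpr fun h =>
    ha (ZMod.injective_stdAddChar (h.trans (AddChar.map_zero_eq_one _).symm))

end StdAddChar

section GaussSum

variable {q : ℕ} [Fact q.Prime] {χ : DirichletCharacter ℂ q}

lemma isPrimitive_of_ne_one (hχ : χ ≠ 1) : χ.IsPrimitive :=
  ((Nat.dvd_prime Fact.out).mp χ.conductor_dvd_level).resolve_left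
    fun h => hχ (χ.eq_one_iff_conductor_eq_one.mpr h)

lemma norm_gaussSum_stdAddChar (hχ : χ ≠ 1) : ‖gaussSum χ ZMod.stdAddChar‖ = √q := by
  have h := gaussSum_mul_gaussSum_eq_card hχ (ZMod.isPrimitive_stdAddChar q)
  rw [← star_gaussSum_eq, ZMod.card] at h
  have hmul : ‖gaussSum χ ZMod.stdAddChar‖ * ‖gaussSum χ ZMod.stdAddChar‖ = q := by
    simpa using congrArg norm h
  rw [← hmul, Real.sqrt_mul_self (norm_nonneg _)]

lemma apply_mul_gaussSum_inv (hχ : χ ≠ 1) (n : ℕ) :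
    χ n * gaussSum χ⁻¹ ZMod.stdAddChar = ∑ a, χ⁻¹ a * ZMod.stdAddChar a ^ n := by
  have h := gaussSum_mulShift_of_isPrimitive ZMod.stdAddChar
    (isPrimitive_of_ne_one (inv_ne_one.mpr hχ)) (n : ZMod q)
  rw [inv_inv] at h
  rw [← h, gaussSum]
  simp only [AddChar.mulShift_apply, ← AddChar.map_nsmul_eq_pow, nsmul_eq_mul]

lemma charSum_succ_mul_gaussSum_inv (hχ : χ ≠ 1) (m : ℕ) :
    charSum χ (m + 1) * gaussSum χ⁻¹ ZMod.stdAddChar = ∑ a, χ⁻¹ a *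
      ((ZMod.stdAddChar a ^ (m + 2) - ZMod.stdAddChar a) / (ZMod.stdAddChar a - 1)) := by
  simp only [charSum, Finset.sum_mul, apply_mul_gaussSum_inv hχ]
  rw [Finset.sum_comm]
  refine Finset.sum_congr rfl fun a _ => ?_
  rcases eq_or_ne a 0 with rfl | ha
  · simp [MulChar.map_zero]
  simp only [pow_succ, ← Finset.mul_sum, ← Finset.sum_mul]
  rw [geom_sum_eq (sub_ne_zero.mp (stdAddChar_sub_one_ne_zero ha))]
  ring

lemma norm_sum_mul_div_gaussSum_le (hχ : χ ≠ 1) {c : ZMod q → ℂ}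
    (hc : ∀ a ≠ 0, ‖c a‖ ≤ 2 * (‖ZMod.stdAddChar a - 1‖ ^ 2)⁻¹) :
    ‖(∑ a, χ a * c a) / gaussSum χ ZMod.stdAddChar‖ ≤ q * √q := by
  have hq : (0 : ℝ) < q := by exact_mod_cast NeZero.pos q
  rw [norm_div, norm_gaussSum_stdAddChar hχ, div_le_iff₀ (Real.sqrt_pos.mpr hq), mul_assoc,
    Real.mul_self_sqrt hq.le]
  calc ‖∑ a, χ a * c a‖ ≤ ∑ a : ZMod q, 2 * (‖ZMod.stdAddChar a - 1‖ ^ 2)⁻¹ := by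
        refine norm_sum_le_of_le _ fun a _ => ?_
        rcases eq_or_ne a 0 with rfl | ha
        · simp [MulChar.map_zero]
        rw [norm_mul]
        exact (mul_le_of_le_one_left (norm_nonneg _) (χ.norm_le_one a)).trans (hc a ha)
    _ ≤ 2 * ((q : ℝ) ^ 2 / 4) := by
        rw [← Finset.mul_sum]
        gcongr
        exact sum_inv_norm_stdAddChar_sub_one_sq_le
    _ ≤ q * q := by nlinarith

/-- The mean value of the partial sums of `χ`, read off from their expansion in additive
characters. -/
noncomputable def charSumMean (χ : DirichletCharacter ℂ q) : ℂ :=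
  (∑ a, χ⁻¹ a * (-ZMod.stdAddChar a / (ZMod.stdAddChar a - 1))) / gaussSum χ⁻¹ ZMod.stdAddChar

lemma norm_charSumMean_le (hχ : χ ≠ 1) : ‖charSumMean χ‖ ≤ q * √q := by
  refine norm_sum_mul_div_gaussSum_le (inv_ne_one.mpr hχ) fun a ha => ?_
  have hpos := norm_pos_iff.mpr (stdAddChar_sub_one_ne_zero ha)
  have hle : ‖ZMod.stdAddChar a - 1‖ ≤ 2 := (norm_sub_le _ _).trans (by norm_num)
  rw [norm_div, norm_neg, AddChar.norm_apply, ← div_eq_mul_inv,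
    div_le_div_iff₀ hpos (by positivity)]
  nlinarith

lemma norm_sum_charSum_sub_mean_le (hχ : χ ≠ 1) (n : ℕ) :
    ‖∑ m ∈ Finset.range n, (charSum χ (m + 1) - charSumMean χ)‖ ≤ q * √q := by
  have hG : gaussSum χ⁻¹ ZMod.stdAddChar ≠ 0 := by
    have : (0 : ℝ) < √q := Real.sqrt_pos.mpr (by exact_mod_cast NeZero.pos q)
    rwa [← norm_pos_iff, norm_gaussSum_stdAddChar (inv_ne_one.mpr hχ)]
  have hterm (m : ℕ) : (charSum χ (m + 1) - charSumMean χ) * gaussSum χ⁻¹ ZMod.stdAddChar =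
      ∑ a, χ⁻¹ a * (ZMod.stdAddChar a ^ (m + 2) / (ZMod.stdAddChar a - 1)) := by
    rw [sub_mul, charSum_succ_mul_gaussSum_inv hχ, charSumMean, div_mul_cancel₀ _ hG,
      ← Finset.sum_sub_distrib]
    exact Finset.sum_congr rfl fun a _ => by ring
  have hsum : ∑ m ∈ Finset.range n, (charSum χ (m + 1) - charSumMean χ) =
      (∑ a, χ⁻¹ a * (ZMod.stdAddChar a ^ 2 * (ZMod.stdAddChar a ^ n - 1) /
        (ZMod.stdAddChar a - 1) ^ 2)) / gaussSum χ⁻¹ ZMod.stdAddChar := by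
    rw [eq_div_iff hG, Finset.sum_mul]
    simp only [hterm]
    rw [Finset.sum_comm]
    refine Finset.sum_congr rfl fun a _ => ?_
    rcases eq_or_ne a 0 with rfl | ha
    · simp [MulChar.map_zero]
    simp only [pow_add, ← Finset.mul_sum, ← Finset.sum_mul, ← Finset.sum_div]
    rw [geom_sum_eq (sub_ne_zero.mp (stdAddChar_sub_one_ne_zero ha))]
    field_simp
  rw [hsum]
  refine norm_sum_mul_div_gaussSum_le (inv_ne_one.mpr hχ) fun a _ => ?_
  rw [norm_div, norm_mul, norm_pow, norm_pow, AddChar.norm_apply, one_pow, one_mul, div_eq_mul_inv]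
  gcongr
  exact (norm_sub_le _ _).trans (by norm_num)

end GaussSum

/-! ### Real characters -/

lemma zetaMul_eq_sum_divisors {q : ℕ} (χ : DirichletCharacter ℂ q) (n : ℕ) :
    χ.zetaMul n = ∑ d ∈ n.divisors, χ d := by
  rw [DirichletCharacter.zetaMul, ArithmeticFunction.coe_zeta_mul_apply]
  refine Finset.sum_congr rfl fun d hd => ?_
  simp [toArithmeticFunction, (Nat.pos_of_mem_divisors hd).ne']

open scoped ComplexOrder in
lemma one_le_zetaMul_prime_pow_two_mul {q : ℕ} {χ : DirichletCharacter ℂ q} (hχ2 : χ ^ 2 = 1)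
    {p : ℕ} (hp : p.Prime) (a : ℕ) : 1 ≤ χ.zetaMul (p ^ (2 * a)) := by
  rw [zetaMul_eq_sum_divisors, Nat.sum_divisors_prime_pow hp]
  simp only [Nat.cast_pow, map_pow]
  rcases MulChar.isQuadratic_iff_sq_eq_one.mpr hχ2 (p : ZMod q) with h | h | h
  · simp [h, Finset.sum_range_succ']
  · simp only [h, one_pow, Finset.sum_const, Finset.card_range, nsmul_eq_mul, mul_one]
    exact_mod_cast Nat.le_add_left 1 (2 * a)
  · rw [h, neg_one_geom_sum, if_neg (Nat.not_even_iff_odd.mpr (odd_two_mul_add_one a))]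

open scoped ComplexOrder in
lemma one_le_zetaMul_sq {q : ℕ} {χ : DirichletCharacter ℂ q} (hχ2 : χ ^ 2 = 1) {m : ℕ}
    (hm : m ≠ 0) : 1 ≤ χ.zetaMul (m ^ 2) := by
  rw [χ.isMultiplicative_zetaMul.multiplicative_factorization _ (pow_ne_zero 2 hm),
    Finsupp.prod, Nat.support_factorization]
  refine Finset.prod_induction _ (1 ≤ ·) (fun _ _ => one_le_mul_of_one_le_of_one_le) le_rfl
    fun p hp => ?_
  rw [Nat.factorization_pow, Finsupp.smul_apply, smul_eq_mul]
  exact one_le_zetaMul_prime_pow_two_mul hχ2 (Nat.prime_of_mem_primeFactors hp) _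

lemma hasSum_pnat_exp_neg_mul {t : ℝ} (ht : 0 < t) :
    HasSum (fun m : ℕ+ => Real.exp (-(m * t))) (1 / (Real.exp t - 1)) := by
  rw [hasSum_pnat_iff_hasSum_succ (f := fun m : ℕ => Real.exp (-(m * t)))]
  have hlt : Real.exp (-t) < 1 := Real.exp_lt_one_iff.mpr (by linarith)
  have hgeom := (hasSum_geometric_of_lt_one (Real.exp_pos (-t)).le hlt).mul_left (Real.exp (-t))
  have hvalue : Real.exp (-t) * (1 - Real.exp (-t))⁻¹ = 1 / (Real.exp t - 1) := by
    have := exp_sub_one_pos ht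
    have hmul : Real.exp t * Real.exp (-t) = 1 := by
      rw [← Real.exp_add, add_neg_cancel, Real.exp_zero]
    rw [← div_eq_mul_inv, div_eq_div_iff (by linarith) (by positivity)]
    linear_combination hmul
  rw [hvalue] at hgeom
  refine hgeom.congr_fun fun m => ?_
  rw [← Real.exp_nat_mul, ← Real.exp_add]
  push_cast
  ring_nf

lemma summable_exp_neg_mul_mul {t : ℝ} (ht : 0 < t) :
    Summable fun c : ℕ+ × ℕ+ => Real.exp (-((c.1 : ℝ) * c.2 * t)) := by
  have hg := (hasSum_pnat_exp_neg_mul (half_pos ht)).summable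
  refine Summable.of_nonneg_of_le (fun c => (Real.exp_pos _).le) (fun c => ?_)
    (hg.mul_of_nonneg hg (fun _ => (Real.exp_pos _).le) (fun _ => (Real.exp_pos _).le))
  rw [← Real.exp_add, Real.exp_le_exp]
  have h1 : (1 : ℝ) ≤ c.1 := mod_cast one_le (a := c.1)
  have h2 : (1 : ℝ) ≤ c.2 := mod_cast one_le (a := c.2)
  have hmul : ((c.1 : ℝ) + c.2) / 2 ≤ c.1 * c.2 := by nlinarith
  nlinarith

section LambertExpansion

variable {q : ℕ} (χ : DirichletCharacter ℂ q) {t : ℝ}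

lemma summable_char_mul_exp_neg_mul (ht : 0 < t) :
    Summable fun c : ℕ+ × ℕ+ => χ (c.1 : ℕ) * (Real.exp (-((c.1 : ℝ) * c.2 * t)) : ℂ) := by
  refine Summable.of_norm_bounded (summable_exp_neg_mul_mul ht) fun c => ?_
  rw [norm_mul, Complex.norm_real, Real.norm_of_nonneg (Real.exp_pos _).le]
  exact mul_le_of_le_one_left (Real.exp_pos _).le (χ.norm_le_one _)

lemma hasSum_char_mul_exp_neg_mul (ht : 0 < t) :
    HasSum (fun c : ℕ+ × ℕ+ => χ (c.1 : ℕ) * (Real.exp (-((c.1 : ℝ) * c.2 * t)) : ℂ))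
      (lambertSeries χ t) := by
  have hsum := (summable_char_mul_exp_neg_mul χ ht).hasSum
  have hrow : ∀ n : ℕ+, HasSum
      (fun m : ℕ+ => χ (n : ℕ) * (Real.exp (-((n : ℝ) * m * t)) : ℂ))
      (χ (n : ℕ) * ((1 / (Real.exp (n * t) - 1) : ℝ) : ℂ)) := fun n => by
    refine ((Complex.hasSum_ofReal.mpr (hasSum_pnat_exp_neg_mul (t := n * t)
      (by positivity))).mul_left (χ (n : ℕ))).congr_fun fun m => ?_
    rw [← mul_assoc, mul_comm (n : ℝ)]
  have hcol := hsum.prod_fiberwise hrow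
  rw [hasSum_pnat_iff_hasSum_succ
    (f := fun n : ℕ => χ (n : ℕ) * ((1 / (Real.exp (n * t) - 1) : ℝ) : ℂ))] at hcol
  rwa [lambertSeries, hcol.tsum_eq]

lemma hasSum_zetaMul_mul_exp (ht : 0 < t) :
    HasSum (fun k : ℕ+ => χ.zetaMul k * (Real.exp (-(k * t)) : ℂ)) (lambertSeries χ t) := by
  have hfiber := (sigmaAntidiagonalEquivProd.hasSum_iff.mpr
    (hasSum_char_mul_exp_neg_mul χ ht)).sigma fun k => hasSum_fintype _
  refine hfiber.congr_fun fun k => ?_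
  have hprod (x : Nat.divisorsAntidiagonal (k : ℕ)) : (x.1.1 : ℝ) * (x.1.2 : ℝ) = (k : ℕ) :=
    mod_cast (Nat.mem_divisorsAntidiagonal.mp x.2).1
  simp only [Function.comp_apply, sigmaAntidiagonalEquivProd, Equiv.coe_fn_mk,
    divisorsAntidiagonalFactors, PNat.mk_coe, hprod]
  rw [Finset.sum_coe_sort (Nat.divisorsAntidiagonal (k : ℕ))
    (fun x => χ (x.1 : ℕ) * (Real.exp (-(k * t)) : ℂ)), ← Finset.sum_mul,
    Nat.sum_divisorsAntidiagonal (fun i _ => χ ((i : ℕ) : ZMod q)), zetaMul_eq_sum_divisors]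

end LambertExpansion

lemma one_div_sixteen_le_exp_neg_sub {x : ℝ} (hx : 1 / 4 ≤ x) (hx1 : x ≤ 1) :
    1 / 16 ≤ Real.exp (-x) - Real.exp (-(2 * x)) := by
  have hfactor : Real.exp (-x) - Real.exp (-(2 * x)) = Real.exp (-x) * (1 - Real.exp (-x)) := by
    rw [mul_sub, mul_one, ← Real.exp_add]; ring_nf
  have hlow : 1 / 3 ≤ Real.exp (-x) := by
    rw [Real.exp_neg, one_div]
    gcongr
    exact (Real.exp_le_exp.mpr hx1).trans (by linarith [Real.exp_one_lt_d9])
  have hupp : Real.exp (-x) ≤ 4 / 5 := by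
    rw [Real.exp_neg, inv_le_comm₀ (Real.exp_pos _) (by norm_num)]
    linarith [Real.add_one_le_exp x]
  rw [hfactor]
  nlinarith

open scoped ComplexOrder in
/-- Only the squares in `[N ^ 2 / 4, N ^ 2]` are kept. -/
lemma div_le_re_lambertSeries_sub {q : ℕ} {χ : DirichletCharacter ℂ q} (hχ2 : χ ^ 2 = 1)
    (N : ℕ+) :
    (N : ℝ) / 32 ≤
      (lambertSeries χ (1 / (N : ℝ) ^ 2) - lambertSeries χ (2 * (1 / (N : ℝ) ^ 2))).re := by
  set t : ℝ := 1 / (N : ℝ) ^ 2 with ht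
  have ht0 : 0 < t := by positivity
  set w : ℝ → ℝ := fun x => Real.exp (-x) - Real.exp (-(2 * x))
  have hsum : HasSum (fun k : ℕ+ => (χ.zetaMul k).re * w (k * t))
      (lambertSeries χ t - lambertSeries χ (2 * t)).re := by
    refine (Complex.hasSum_re ((hasSum_zetaMul_mul_exp χ ht0).sub
      (hasSum_zetaMul_mul_exp χ (t := 2 * t) (by positivity)))).congr_fun fun k => ?_
    rw [← mul_sub, ← Complex.ofReal_sub, Complex.re_mul_ofReal, mul_left_comm (k : ℝ) 2]
  have hnonneg : ∀ k : ℕ+, 0 ≤ (χ.zetaMul k).re * w (k * t) := fun k => by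
    refine mul_nonneg (Complex.le_def.mp (DirichletCharacter.zetaMul_nonneg hχ2 k)).1 ?_
    have : 0 < (k : ℝ) * t := by positivity
    rw [sub_nonneg, Real.exp_le_exp]
    linarith
  obtain ⟨M, hM⟩ : ∃ M : ℕ+, (M : ℕ) = (N + 1) / 2 :=
    ⟨⟨(N + 1) / 2, by have := N.pos; omega⟩, rfl⟩
  have hsquare : ∀ m ∈ Finset.Icc M N,
      1 / 16 ≤ (χ.zetaMul (m ^ 2 : ℕ+)).re * w ((m ^ 2 : ℕ+) * t) := fun m hm => by
    rw [Finset.mem_Icc, ← PNat.coe_le_coe, hM] at hm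
    have hNm : (N : ℝ) ≤ 2 * m := mod_cast (by omega : (N : ℕ) ≤ 2 * m)
    have hmN : (m : ℝ) ≤ N := mod_cast hm.2
    have hcoeff : 1 ≤ (χ.zetaMul (m ^ 2 : ℕ+)).re := by
      simpa using (Complex.le_def.mp (one_le_zetaMul_sq hχ2 m.ne_zero)).1
    have hweight : 1 / 16 ≤ w ((m ^ 2 : ℕ+) * t) := by
      rw [PNat.pow_coe, Nat.cast_pow, ht, mul_one_div]
      apply one_div_sixteen_le_exp_neg_sub
      · rw [div_le_div_iff₀ (by norm_num) (by positivity)]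
        nlinarith
      · rw [div_le_one (by positivity)]
        gcongr
    nlinarith
  have hpartial := sum_le_hasSum ((Finset.Icc M N).image (· ^ 2)) (fun k _ => hnonneg k) hsum
  rw [Finset.sum_image (pow_left_injective two_ne_zero).injOn] at hpartial
  have hcount := (Finset.card_nsmul_le_sum _ _ _ hsquare).trans hpartial
  rw [PNat.card_Icc, hM, nsmul_eq_mul] at hcount
  have : (N : ℝ) ≤ 2 * ((N + 1 - (N + 1) / 2 : ℕ) : ℝ) :=
    mod_cast (by omega : (N : ℕ) ≤ 2 * (N + 1 - (N + 1) / 2))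
  linarith

section PrimeModulus

variable {q : ℕ} [Fact q.Prime] {χ : DirichletCharacter ℂ q}

/-- With `t = 1 / N ^ 2` and `N` of size `√q`, the difference of Lambert series is at least
`N / 32`, while its distance from `N ^ 2 L(1, χ) / 2` is at most `2 q ^ (3 / 2) / N ^ 2`. -/
lemma le_norm_LFunction_one_of_sq_eq_one (hχ : χ ≠ 1) (hχ2 : χ ^ 2 = 1) :
    1 / (640 * √q) ≤ ‖χ.LFunction 1‖ := by
  have hq : (1 : ℝ) ≤ q := mod_cast (Fact.out : q.Prime).one_le
  have hsqrt : 1 ≤ √(q : ℝ) := Real.one_le_sqrt.mpr hq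
  have hqpow : (q : ℝ) * √q = √q ^ 3 := by rw [pow_succ, Real.sq_sqrt (by linarith)]
  let N : ℕ+ := 10 * (Nat.sqrt q).succPNat
  have hNcast : (N : ℝ) = 10 * (Nat.sqrt q + 1) := by simp [N]
  have hlower : 10 * √(q : ℝ) ≤ N := by
    linarith [Real.real_sqrt_lt_nat_sqrt_succ (a := q)]
  have hupper : (N : ℝ) ≤ 20 * √(q : ℝ) := by
    linarith [Real.nat_sqrt_le_real_sqrt (a := q)]
  have : (0 : ℝ) < N := by linarith
  set L := χ.LFunction 1 with hL
  set W := lambertSeries χ (1 / (N : ℝ) ^ 2) - lambertSeries χ (2 * (1 / (N : ℝ) ^ 2))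
  have hW : (N : ℝ) / 32 ≤ ‖W‖ :=
    (div_le_re_lambertSeries_sub hχ2 N).trans (Complex.re_le_norm W)
  have happrox : ‖W - (N : ℝ) ^ 2 / 2 * L‖ ≤ 2 * (q * √q) * (1 / (N : ℝ) ^ 2) := by
    convert norm_lambertSeries_sub_sub_le hχ (norm_charSumMean_le hχ)
      (norm_sum_charSum_sub_mean_le hχ) (by positivity : 0 < 1 / (N : ℝ) ^ 2) using 3
    rw [hL]
    push_cast
    field_simp
  have herror : 2 * (q * √(q : ℝ)) * (1 / (N : ℝ) ^ 2) ≤ N / 64 := by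
    have hcube : (10 * √(q : ℝ)) ^ 3 ≤ (N : ℝ) ^ 3 := by gcongr
    rw [mul_one_div, div_le_iff₀ (by positivity), hqpow]
    nlinarith
  have hmain : (N : ℝ) / 64 ≤ (N : ℝ) ^ 2 / 2 * ‖L‖ := by
    have hnorm : ‖((N : ℝ) : ℂ) ^ 2 / 2 * L‖ = (N : ℝ) ^ 2 / 2 * ‖L‖ := by simp
    linarith [norm_sub_norm_le W ((N : ℝ) ^ 2 / 2 * L)]
  calc 1 / (640 * √(q : ℝ)) ≤ 1 / (32 * N) :=
        one_div_le_one_div_of_le (by positivity) (by linarith)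
    _ ≤ ‖L‖ := by
      rw [div_le_iff₀ (by positivity)]
      refine le_of_mul_le_mul_left ?_ (by positivity : (0 : ℝ) < N / 64)
      linarith

lemma norm_logDeriv_LFunction_one_le_of_sq_eq_one (hq : 3 ≤ q) (hχ : χ ≠ 1) (hχ2 : χ ^ 2 = 1) :
    ‖logDeriv χ.LFunction 1‖ ≤ 40960 * √q * Real.log q ^ 2 := by
  have hL := one_le_log_natCast hq
  have : 0 < √(q : ℝ) := by positivity
  rw [logDeriv_apply, norm_div]
  calc _ ≤ 64 * Real.log q ^ 2 / (1 / (640 * √q)) := by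
        gcongr
        · exact norm_deriv_LFunction_le hq hχ (by rw [sub_self, norm_zero]; positivity)
        · exact le_norm_LFunction_one_of_sq_eq_one hχ hχ2
    _ = 40960 * √q * Real.log q ^ 2 := by field_simp; norm_num

end PrimeModulus

/-! ### Characters trivial on the `r`-th roots of unity -/

open Classical in
/-- The group `X_r` of the Dirichlet characters modulo `q` that are trivial on the `r`-th roots of
unity, as a finset. -/
noncomputable def charsTrivialOnRoots (q r : ℕ) [NeZero q] : Finset (DirichletCharacter ℂ q) :=
  Finset.univ.filter fun χ => ∀ a : ZMod q, a ^ r = 1 → χ a = 1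

section NeZero

variable {q r : ℕ} [NeZero q]

lemma mem_charsTrivialOnRoots {χ : DirichletCharacter ℂ q} :
    χ ∈ charsTrivialOnRoots q r ↔ ∀ a : ZMod q, a ^ r = 1 → χ a = 1 := by
  simp [charsTrivialOnRoots]

lemma one_mem_charsTrivialOnRoots (hr : r ≠ 0) : 1 ∈ charsTrivialOnRoots q r :=
  mem_charsTrivialOnRoots.mpr fun _ ha => MulChar.one_apply (IsUnit.of_pow_eq_one ha hr)

lemma apply_eq_one_or_neg_one_of_mem_charsTrivialOnRoots {b : ZMod q} (hb : b ^ r = -1)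
    {χ : DirichletCharacter ℂ q} (hχ : χ ∈ charsTrivialOnRoots q r) : χ b = 1 ∨ χ b = -1 := by
  rw [← sq_eq_one_iff, ← map_pow]
  refine mem_charsTrivialOnRoots.mp hχ _ ?_
  rw [pow_right_comm, hb, neg_one_sq]

lemma sum_charsTrivialOnRoots_eq_zero (hr : r ≠ 0) {c : ZMod q} (hc : c ^ r ≠ 1) :
    ∑ χ ∈ charsTrivialOnRoots q r, χ c = 0 := by
  obtain ⟨ψ, hψ⟩ :=
    DirichletCharacter.exists_apply_ne_one_of_hasEnoughRootsOfUnity ℂ (n := q) hc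
  have hψr (a : ZMod q) : (ψ ^ r) a = ψ (a ^ r) := by rw [MulChar.pow_apply' _ hr, map_pow]
  refine eq_zero_of_mul_eq_self_left hψ ?_
  rw [Finset.mul_sum]
  refine Finset.sum_equiv (Equiv.mulLeft (ψ ^ r)) (fun χ => ?_) fun χ _ => ?_
  · rw [mem_charsTrivialOnRoots, mem_charsTrivialOnRoots]
    refine forall₂_congr fun a ha => ?_
    rw [Equiv.coe_mulLeft, MulChar.mul_apply, hψr, ha, map_one, one_mul]
  · rw [Equiv.coe_mulLeft, MulChar.mul_apply, hψr]

end NeZero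

open Classical in
lemma gammaK_eq (q r : ℕ) [NeZero q] :
    gammaK q r = Real.eulerMascheroniConstant +
      (∑ χ ∈ (charsTrivialOnRoots q r).erase 1, logDeriv χ.LFunction 1).re := by
  have hL (χ : DirichletCharacter ℂ q) : Lfun χ = χ.LFunction := by
    funext s; rw [Lfun, dif_neg (NeZero.ne q)]
  rw [gammaK, finsum_mem_eq_finite_toFinset_sum _ (Set.toFinite _)]
  congr 2
  refine Finset.sum_congr ?_ fun χ _ => by rw [hL, logDeriv_apply]
  ext χ
  simp [mem_charsTrivialOnRoots]

section PrimeModulus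

variable {q r : ℕ} [Fact q.Prime]

lemma mem_charsTrivialOnRoots_two_mul_iff {b : ZMod q} (hb : b ^ r = -1)
    {χ : DirichletCharacter ℂ q} :
    χ ∈ charsTrivialOnRoots q (2 * r) ↔ χ ∈ charsTrivialOnRoots q r ∧ χ b = 1 := by
  rw [mem_charsTrivialOnRoots, mem_charsTrivialOnRoots]
  refine ⟨fun h => ⟨fun a ha => h a ?_, h b ?_⟩, fun ⟨htriv, hχb⟩ a ha => ?_⟩
  · rw [pow_mul', ha, one_pow]
  · rw [pow_mul', hb, neg_one_sq]
  · rw [pow_mul', sq_eq_one_iff] at ha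
    rcases ha with ha | ha
    · exact htriv a ha
    · have hinv : χ (a * b⁻¹) = 1 := htriv _ (by rw [mul_pow, ha, inv_pow, hb]; norm_num)
      have hb0 : b ≠ 0 := by
        rintro rfl
        rw [MulChar.map_zero] at hχb
        exact zero_ne_one hχb
      rw [← inv_mul_cancel_right₀ hb0 a, map_mul, hinv, hχb, one_mul]

open Classical in
lemma two_mul_gammaK_sub_gammaK {b : ZMod q} (hb : b ^ r = -1) :
    2 * gammaK q (2 * r) - gammaK q r = Real.eulerMascheroniConstant +
      (∑ χ ∈ (charsTrivialOnRoots q r).erase 1, χ b * logDeriv χ.LFunction 1).re := by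
  have hfilter : (charsTrivialOnRoots q (2 * r)).erase 1 =
      ((charsTrivialOnRoots q r).erase 1).filter fun χ => χ b = 1 := by
    ext χ
    simp only [Finset.mem_erase, Finset.mem_filter, mem_charsTrivialOnRoots_two_mul_iff hb,
      and_assoc]
  have hsum : 2 * ∑ χ ∈ (charsTrivialOnRoots q (2 * r)).erase 1, logDeriv χ.LFunction 1 -
      ∑ χ ∈ (charsTrivialOnRoots q r).erase 1, logDeriv χ.LFunction 1 =
      ∑ χ ∈ (charsTrivialOnRoots q r).erase 1, χ b * logDeriv χ.LFunction 1 := by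
    rw [hfilter, Finset.sum_filter, Finset.mul_sum, ← Finset.sum_sub_distrib]
    refine Finset.sum_congr rfl fun χ hχ => ?_
    rcases apply_eq_one_or_neg_one_of_mem_charsTrivialOnRoots hb (Finset.mem_of_mem_erase hχ)
      with h | h
    · rw [if_pos h, h]; ring
    · rw [if_neg (by rw [h]; norm_num), h]; ring
  have hre (z : ℂ) : (2 * z).re = 2 * z.re := by simp
  rw [gammaK_eq, gammaK_eq, ← hsum, Complex.sub_re, hre]
  ring

lemma card_le_of_apply_generator_pow_eq_one {n : ℕ} (hn : 0 < n)
    {S : Finset (DirichletCharacter ℂ q)} {g : (ZMod q)ˣ} (hg : ∀ x, x ∈ Subgroup.zpowers g)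
    (hS : ∀ χ ∈ S, χ g ^ n = 1) : S.card ≤ n := by
  refine le_trans ?_ ((Multiset.toFinset_card_le _).trans (Polynomial.card_nthRoots n (1 : ℂ)))
  refine Finset.card_le_card_of_injOn (fun χ => χ g) (fun χ hχ => ?_) fun χ _ ψ _ h => ?_
  · simpa [Polynomial.mem_nthRoots hn] using hS χ hχ
  · refine MulChar.ext fun a => ?_
    obtain ⟨k, rfl⟩ := hg a
    have hzpow (φ : DirichletCharacter ℂ q) :
        φ ((g ^ k : (ZMod q)ˣ) : ZMod q) = φ g ^ k := by
      rw [← MulChar.coe_toUnitHom, map_zpow, Units.val_zpow_eq_zpow_val, MulChar.coe_toUnitHom]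
    rw [hzpow, hzpow]
    exact congrArg (· ^ k) h

lemma card_charsTrivialOnRoots_le (hr : r ∣ q - 1) :
    (charsTrivialOnRoots q r).card ≤ (q - 1) / r := by
  obtain ⟨g, hg⟩ := IsCyclic.exists_generator (α := (ZMod q)ˣ)
  have hq : 0 < q - 1 := Nat.sub_pos_of_lt (Fact.out : q.Prime).one_lt
  refine card_le_of_apply_generator_pow_eq_one
    (Nat.div_pos (Nat.le_of_dvd hq hr) (Nat.pos_of_dvd_of_pos hr hq)) hg fun χ hχ => ?_
  rw [← map_pow]
  refine mem_charsTrivialOnRoots.mp hχ _ ?_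
  rw [← pow_mul, Nat.div_mul_cancel hr]
  exact ZMod.pow_card_sub_one_eq_one g.ne_zero

open Classical in
lemma card_filter_sq_eq_one_le (S : Finset (DirichletCharacter ℂ q)) :
    (S.filter fun χ => χ ^ 2 = 1).card ≤ 2 := by
  obtain ⟨g, hg⟩ := IsCyclic.exists_generator (α := (ZMod q)ˣ)
  refine card_le_of_apply_generator_pow_eq_one two_pos hg fun χ hχ => ?_
  rw [← MulChar.pow_apply_coe, (Finset.mem_filter.mp hχ).2, MulChar.one_apply_coe]

end PrimeModulus

/-! ### The logarithmic derivatives to the right of `1` -/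

/-- The coefficient `Λ(n) n ^ (-(1 + u))` of the series for `-ζ'/ζ` at `1 + u`. -/
noncomputable def vonMangoldtTerm (u : ℝ) (n : ℕ) : ℝ :=
  ArithmeticFunction.vonMangoldt n * (n : ℝ) ^ (-(1 + u))

lemma vonMangoldtTerm_nonneg (u : ℝ) (n : ℕ) : 0 ≤ vonMangoldtTerm u n :=
  mul_nonneg ArithmeticFunction.vonMangoldt_nonneg (by positivity)

section VonMangoldtTerm

variable {u : ℝ}

lemma vonMangoldtTerm_le (hu : 0 < u) {n : ℕ} (hn : n ≠ 0) :
    vonMangoldtTerm u n ≤ 2 / u * (n : ℝ) ^ (-(1 + u / 2)) := by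
  have hn0 : (0 : ℝ) < n := by positivity
  have hΛ : ArithmeticFunction.vonMangoldt n ≤ (n : ℝ) ^ (u / 2) / (u / 2) :=
    ArithmeticFunction.vonMangoldt_le_log.trans (Real.log_le_rpow_div hn0.le (by positivity))
  calc vonMangoldtTerm u n ≤ (n : ℝ) ^ (u / 2) / (u / 2) * (n : ℝ) ^ (-(1 + u)) := by
        rw [vonMangoldtTerm]; gcongr
    _ = 2 / u * ((n : ℝ) ^ (u / 2) * (n : ℝ) ^ (-(1 + u))) := by ring
    _ = 2 / u * (n : ℝ) ^ (-(1 + u / 2)) := by rw [← Real.rpow_add hn0]; ring_nf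

lemma summable_vonMangoldtTerm (hu : 0 < u) : Summable (vonMangoldtTerm u) := by
  rw [← summable_nat_add_iff 1]
  exact Summable.of_nonneg_of_le (fun n => vonMangoldtTerm_nonneg _ _)
    (fun n => vonMangoldtTerm_le hu n.succ_ne_zero)
    ((summable_rpow_succ (half_pos hu)).mul_left _)

lemma two_div_mul_tsum_rpow_succ_le (hu : 0 < u) (hu1 : u ≤ 1) :
    2 / u * ∑' n : ℕ, ((n + 1 : ℕ) : ℝ) ^ (-(1 + u / 2)) ≤ 8 / u ^ 2 := by
  have h1 : 1 ≤ 1 / u := by rwa [le_div_iff₀ hu, one_mul]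
  calc _ ≤ 2 / u * (1 + 1 / (u / 2)) := by gcongr; exact tsum_rpow_succ_le (half_pos hu)
    _ ≤ 2 / u * (2 * (1 / u) + 1 / (u / 2)) := by gcongr; linarith
    _ = 8 / u ^ 2 := by field_simp; norm_num

lemma tsum_vonMangoldtTerm_le (hu : 0 < u) (hu1 : u ≤ 1) :
    ∑' n, vonMangoldtTerm u n ≤ 8 / u ^ 2 := by
  have hs := summable_vonMangoldtTerm hu
  rw [hs.tsum_eq_zero_add, vonMangoldtTerm, ArithmeticFunction.map_zero, zero_mul, zero_add]
  refine le_trans ?_ (two_div_mul_tsum_rpow_succ_le hu hu1)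
  rw [← tsum_mul_left]
  exact ((summable_nat_add_iff 1).mpr hs).tsum_le_tsum
    (fun n => vonMangoldtTerm_le hu n.succ_ne_zero)
    ((summable_rpow_succ (half_pos hu)).mul_left (2 / u))

variable {q : ℕ} [NeZero q] (χ : DirichletCharacter ℂ q)

lemma hasSum_logDeriv_LFunction (hu : 0 < u) :
    HasSum (fun n : ℕ => -(χ n * (vonMangoldtTerm u n : ℂ)))
      (logDeriv χ.LFunction (1 + u)) := by
  have hs : 1 < (1 + u : ℂ).re := by simp [hu]
  have hvalue : logDeriv χ.LFunction (1 + u) = -∑' n, LSeries.term ((fun n : ℕ => χ n) *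
      fun n : ℕ => (ArithmeticFunction.vonMangoldt n : ℂ)) (1 + u) n := by
    rw [logDeriv_apply, χ.deriv_LFunction_eq_deriv_LSeries hs, χ.LFunction_eq_LSeries hs,
      ← neg_neg (_ / _), ← neg_div]
    exact congrArg Neg.neg (χ.LSeries_twist_vonMangoldt_eq hs).symm
  rw [hvalue]
  refine (χ.LSeriesSummable_twist_vonMangoldt hs).hasSum.neg.congr_fun fun n => ?_
  congr 1
  rcases eq_or_ne n 0 with rfl | hn
  · simp [vonMangoldtTerm]
  · rw [LSeries.term_of_ne_zero hn, Pi.mul_apply, vonMangoldtTerm, Complex.ofReal_mul,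
      Complex.ofReal_cpow (by positivity), div_eq_mul_inv, ← Complex.cpow_neg, mul_assoc]
    push_cast
    rfl

lemma norm_logDeriv_LFunction_le (hu : 0 < u) (hu1 : u ≤ 1) :
    ‖logDeriv χ.LFunction (1 + u)‖ ≤ 8 / u ^ 2 := by
  rw [← (hasSum_logDeriv_LFunction χ hu).tsum_eq]
  refine (tsum_of_norm_bounded (summable_vonMangoldtTerm hu).hasSum fun n => ?_).trans
    (tsum_vonMangoldtTerm_le hu hu1)
  rw [norm_neg, norm_mul, Complex.norm_real, Real.norm_of_nonneg (vonMangoldtTerm_nonneg u n)]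
  exact mul_le_of_le_one_left (vonMangoldtTerm_nonneg u n) (χ.norm_le_one _)

end VonMangoldtTerm

section PrimeModulus

variable {q r : ℕ} [Fact q.Prime] {b : ZMod q} {u : ℝ}

lemma norm_sum_charsTrivialOnRoots_apply_mul_le (hr : r ≠ 0) (hrq : r ∣ q - 1) (hb : b ^ r = -1)
    (n : ℕ) :
    ‖∑ χ ∈ charsTrivialOnRoots q r, χ (b * n)‖ ≤
      {n : ℕ | (n : ZMod q) ^ r = -1}.indicator (fun _ => (((q - 1) / r : ℕ) : ℝ)) n := by
  by_cases hn : (n : ZMod q) ^ r = -1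
  · rw [Set.indicator_of_mem (s := {n : ℕ | (n : ZMod q) ^ r = -1}) hn]
    refine (norm_sum_le_of_le _ fun χ _ => χ.norm_le_one (b * n)).trans ?_
    rw [Finset.sum_const, nsmul_one]
    exact_mod_cast card_charsTrivialOnRoots_le hrq
  · rw [Set.indicator_of_notMem (s := {n : ℕ | (n : ZMod q) ^ r = -1}) hn,
      sum_charsTrivialOnRoots_eq_zero hr, norm_zero]
    rw [mul_pow, hb]
    exact fun h => hn (by linear_combination -h)

open Classical in
lemma norm_sum_mul_logDeriv_le (hr : r ≠ 0) (hrq : r ∣ q - 1) (hb : b ^ r = -1) (hu : 0 < u)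
    (hu1 : u ≤ 1) :
    ‖∑ χ ∈ (charsTrivialOnRoots q r).erase 1, χ b * logDeriv χ.LFunction (1 + u)‖ ≤
      ((q - 1) / r : ℕ) *
        ∑' n, {n : ℕ | (n : ZMod q) ^ r = -1}.indicator (vonMangoldtTerm u) n + 8 / u ^ 2 := by
  have hsum : HasSum (fun n : ℕ => ∑ χ ∈ charsTrivialOnRoots q r,
      χ b * -(χ n * (vonMangoldtTerm u n : ℂ)))
      (∑ χ ∈ charsTrivialOnRoots q r, χ b * logDeriv χ.LFunction (1 + u)) :=
    hasSum_sum fun χ _ => (hasSum_logDeriv_LFunction χ hu).mul_left _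
  have hall : ‖∑ χ ∈ charsTrivialOnRoots q r, χ b * logDeriv χ.LFunction (1 + u)‖ ≤
      ((q - 1) / r : ℕ) *
        ∑' n, {n : ℕ | (n : ZMod q) ^ r = -1}.indicator (vonMangoldtTerm u) n := by
    rw [← hsum.tsum_eq]
    refine tsum_of_norm_bounded (((summable_vonMangoldtTerm hu).indicator _).hasSum.mul_left _)
      fun n => ?_
    have hfactor : ∑ χ ∈ charsTrivialOnRoots q r, χ b * -(χ n * (vonMangoldtTerm u n : ℂ)) =
        -(vonMangoldtTerm u n : ℂ) * ∑ χ ∈ charsTrivialOnRoots q r, χ (b * n) := by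
      rw [Finset.mul_sum]
      refine Finset.sum_congr rfl fun χ _ => ?_
      rw [map_mul]
      ring
    rw [hfactor, norm_mul, norm_neg, Complex.norm_real,
      Real.norm_of_nonneg (vonMangoldtTerm_nonneg u n), mul_comm]
    refine (mul_le_mul_of_nonneg_right (norm_sum_charsTrivialOnRoots_apply_mul_le hr hrq hb n)
      (vonMangoldtTerm_nonneg u n)).trans_eq ?_
    simp only [Set.indicator_apply, ite_mul, mul_ite, zero_mul, mul_zero]
  have hprincipal : ‖(1 : DirichletCharacter ℂ q) b *
      logDeriv (1 : DirichletCharacter ℂ q).LFunction (1 + u)‖ ≤ 8 / u ^ 2 := by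
    rw [norm_mul]
    exact (mul_le_of_le_one_left (norm_nonneg _) (DirichletCharacter.norm_le_one _ _)).trans
      (norm_logDeriv_LFunction_le _ hu hu1)
  rw [Finset.sum_erase_eq_sub (one_mem_charsTrivialOnRoots hr)]
  exact norm_sub_le_of_le hall hprincipal

end PrimeModulus

/-! ### Prime powers `n` with `n ^ r = -1` modulo `q` -/

lemma log_log_natCast_pos {q : ℕ} (hq : 3 ≤ q) : 0 < Real.log (Real.log q) := by
  have hexp : Real.exp 1 < q := by
    have : (3 : ℝ) ≤ q := mod_cast hq
    linarith [Real.exp_one_lt_d9]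
  exact Real.log_pos (by rwa [Real.lt_log_iff_exp_lt (by positivity)])

lemma log_le_two_mul_sqrt {x : ℝ} (hx : 0 ≤ x) : Real.log x ≤ 2 * √x := by
  have h := Real.log_le_rpow_div (ε := 1 / 2) hx (by norm_num)
  rw [← Real.sqrt_eq_rpow] at h
  linarith

/-- The part `(log q)³ / (q ^ (1/r) log log q)` of the error term, due to the smallest residues
`j` with `j ^ r = ±1` modulo `q`. -/
noncomputable def rootErrorTerm (q r : ℕ) : ℝ :=
  Real.log q ^ 3 / ((q : ℝ) ^ ((1 : ℝ) / r) * Real.log (Real.log q))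

lemma rootErrorTerm_nonneg {q : ℕ} (hq : 3 ≤ q) (r : ℕ) : 0 ≤ rootErrorTerm q r := by
  have := one_le_log_natCast hq
  have := log_log_natCast_pos hq
  rw [rootErrorTerm]
  positivity

/-- The two bounds on `x` are used for `r log log q ≤ 2 log q` and for `r log log q ≥ 2 log q`,
where `q ^ (1 / r) ≤ √(log q)`. -/
lemma log_mul_le_rootErrorTerm {q r : ℕ} (hq : 3 ≤ q) (hr : 1 ≤ r) {x : ℝ}
    (hxr : x ≤ 2 * r / (q : ℝ) ^ ((1 : ℝ) / r)) (hxq : x ≤ 2 * Real.log q) :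
    Real.log q * x ≤ 4 * rootErrorTerm q r := by
  have hL := one_le_log_natCast hq
  have hl := log_log_natCast_pos hq
  have hr0 : (0 : ℝ) < r := mod_cast hr
  have hy : 0 < (q : ℝ) ^ ((1 : ℝ) / r) := by positivity
  rw [rootErrorTerm]
  set L := Real.log q
  set y := (q : ℝ) ^ ((1 : ℝ) / r) with hydef
  rw [← mul_div_assoc, le_div_iff₀ (by positivity)]
  rcases le_total ((r : ℝ) * Real.log L) (2 * L) with h | h
  · rw [le_div_iff₀ hy] at hxr
    calc L * x * (y * Real.log L) = L * Real.log L * (x * y) := by ring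
      _ ≤ L * Real.log L * (2 * r) := by gcongr
      _ = 2 * L * (r * Real.log L) := by ring
      _ ≤ 2 * L * (2 * L) := by gcongr
      _ = 4 * L ^ 2 := by ring
      _ ≤ 4 * L ^ 3 := by gcongr; norm_num
  · have hyL : y ≤ √L := by
      rw [Real.le_sqrt' hy, ← Real.log_le_log_iff (by positivity) (by positivity),
        Real.log_pow, hydef, Real.log_rpow (by positivity)]
      push_cast
      rw [one_div, mul_left_comm, inv_mul_le_iff₀ hr0]
      exact h
    have hyl : y * Real.log L ≤ 2 * L :=
      calc y * Real.log L ≤ √L * (2 * √L) := by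
            gcongr; exact log_le_two_mul_sqrt (by linarith)
        _ = 2 * (√L * √L) := by ring
        _ = 2 * L := by rw [Real.mul_self_sqrt (by linarith)]
    calc L * x * (y * Real.log L) ≤ L * (2 * L) * (2 * L) := by gcongr
      _ = 4 * L ^ 3 := by ring

lemma card_filter_pow_eq_le {R : Type*} [CommRing R] [IsDomain R] [Fintype R] [DecidableEq R]
    {r : ℕ} (hr : 0 < r) (c : R) : (Finset.univ.filter fun j : R => j ^ r = c).card ≤ r := by
  refine le_trans (Finset.card_le_card (t := (Polynomial.nthRoots r c).toFinset) fun j hj => ?_)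
    ((Multiset.toFinset_card_le _).trans (Polynomial.card_nthRoots r c))
  simpa [Polynomial.mem_nthRoots hr] using hj

lemma le_pow_val_add_one {q : ℕ} [NeZero q] {j : ZMod q} {r : ℕ} (hj : j ^ r = -1) :
    q ≤ j.val ^ r + 1 := by
  refine Nat.le_of_dvd (Nat.succ_pos _) ((ZMod.natCast_eq_zero_iff _ _).mp ?_)
  rw [Nat.cast_add, Nat.cast_pow, ZMod.natCast_zmod_val, hj, Nat.cast_one, neg_add_cancel]

lemma inv_val_le_of_pow_eq_neg_one {q r : ℕ} (hq : 2 ≤ q) (hr : 1 ≤ r) {j : ZMod q}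
    (hj : j ^ r = -1) : (j.val : ℝ)⁻¹ ≤ 2 / (q : ℝ) ^ ((1 : ℝ) / r) := by
  have : NeZero q := ⟨by omega⟩
  have hval := le_pow_val_add_one hj
  have hpos : 0 < j.val := by
    refine Nat.pos_of_ne_zero fun h => ?_
    rw [h, zero_pow (by omega)] at hval
    omega
  have hone : (1 : ℝ) ≤ j.val := mod_cast hpos
  have hpow : (q : ℝ) ≤ (2 * (j.val : ℝ)) ^ (r : ℝ) :=
    calc (q : ℝ) ≤ (j.val : ℝ) ^ r + 1 := mod_cast hval
      _ ≤ 2 * (j.val : ℝ) ^ r := by linarith [one_le_pow₀ hone (n := r)]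
      _ ≤ 2 ^ r * (j.val : ℝ) ^ r := by
        gcongr
        exact le_self_pow₀ one_le_two (by omega)
      _ = (2 * (j.val : ℝ)) ^ (r : ℝ) := by rw [Real.rpow_natCast, mul_pow]
  have hroot : (q : ℝ) ^ ((1 : ℝ) / r) ≤ 2 * (j.val : ℝ) := by
    rw [one_div]
    exact (Real.rpow_inv_le_iff_of_pos (by positivity) (by positivity) (mod_cast hr)).mpr hpow
  rw [inv_eq_one_div, div_le_div_iff₀ (by linarith) (by positivity)]
  linarith

lemma sum_inv_val_le {q : ℕ} (hq : 3 ≤ q) (T : Finset (ZMod q)) :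
    ∑ j ∈ T, (j.val : ℝ)⁻¹ ≤ 2 * Real.log q := by
  have : NeZero q := ⟨by omega⟩
  have hle : ∑ j ∈ T, (j.val : ℝ)⁻¹ ≤ ∑ n ∈ Finset.range (q + 1), (n : ℝ)⁻¹ := by
    rw [← Finset.sum_image (f := fun n : ℕ => (n : ℝ)⁻¹) (ZMod.val_injective q).injOn]
    refine Finset.sum_le_sum_of_subset_of_nonneg (fun n hn => ?_) fun _ _ _ => by positivity
    obtain ⟨j, -, rfl⟩ := Finset.mem_image.mp hn
    exact Finset.mem_range.mpr ((ZMod.val_lt j).trans (Nat.lt_succ_self q))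
  rw [Finset.sum_range_succ', Nat.cast_zero, inv_zero, add_zero] at hle
  linarith [sum_range_inv_le_one_add_log q, one_le_log_natCast hq]

section VonMangoldtTerm

variable {q : ℕ} {u : ℝ}

lemma vonMangoldtTerm_add_mul_succ_le (hq : 1 ≤ q) (hu : 0 < u) (a m : ℕ) :
    vonMangoldtTerm u (a + q * (m + 1)) ≤
      (q : ℝ)⁻¹ * (2 / u * ((m + 1 : ℕ) : ℝ) ^ (-(1 + u / 2))) := by
  have hq1 : (1 : ℝ) ≤ q := mod_cast hq
  refine (vonMangoldtTerm_le hu (by positivity)).trans ?_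
  rw [mul_left_comm]
  refine mul_le_mul_of_nonneg_left ?_ (by positivity)
  calc ((a + q * (m + 1) : ℕ) : ℝ) ^ (-(1 + u / 2))
      ≤ ((q : ℝ) * ((m + 1 : ℕ) : ℝ)) ^ (-(1 + u / 2)) := by
        refine Real.rpow_le_rpow_of_nonpos (by positivity) ?_ (by linarith)
        push_cast
        linarith [Nat.cast_nonneg (α := ℝ) a]
    _ = (q : ℝ) ^ (-(1 + u / 2)) * ((m + 1 : ℕ) : ℝ) ^ (-(1 + u / 2)) :=
        Real.mul_rpow (by positivity) (by positivity)
    _ ≤ (q : ℝ)⁻¹ * ((m + 1 : ℕ) : ℝ) ^ (-(1 + u / 2)) := by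
        gcongr
        rw [← Real.rpow_neg_one]
        exact Real.rpow_le_rpow_of_exponent_le hq1 (by linarith)

lemma vonMangoldtTerm_le_log_mul_inv (hu : 0 < u) {n : ℕ} (hn : 1 ≤ n) (hnq : n ≤ q) :
    vonMangoldtTerm u n ≤ Real.log q * (n : ℝ)⁻¹ := by
  have hn1 : (1 : ℝ) ≤ n := mod_cast hn
  have hlog : ArithmeticFunction.vonMangoldt n ≤ Real.log q :=
    ArithmeticFunction.vonMangoldt_le_log.trans
      (Real.log_le_log (by linarith) (by exact_mod_cast hnq))
  rw [vonMangoldtTerm]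
  gcongr
  rw [← Real.rpow_neg_one]
  exact Real.rpow_le_rpow_of_exponent_le hn1 (by linarith)

lemma tsum_vonMangoldtTerm_add_mul_le [NeZero q] {j : ZMod q} (hj : j ≠ 0) (hu : 0 < u)
    (hu1 : u ≤ 1) :
    ∑' m : ℕ, vonMangoldtTerm u (j.val + q * m) ≤
      Real.log q * (j.val : ℝ)⁻¹ + 8 / (q * u ^ 2) := by
  have hq : 1 ≤ q := NeZero.one_le
  have hinj : Function.Injective fun m : ℕ => j.val + q * m := fun a b h =>
    Nat.eq_of_mul_eq_mul_left hq (Nat.add_left_cancel h)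
  have hs := (summable_vonMangoldtTerm hu).comp_injective hinj
  simp only [Function.comp_def] at hs
  rw [hs.tsum_eq_zero_add, mul_zero, add_zero]
  refine add_le_add (vonMangoldtTerm_le_log_mul_inv hu
    (Nat.one_le_iff_ne_zero.mpr ((ZMod.val_ne_zero j).mpr hj)) (ZMod.val_lt j).le) ?_
  calc _ ≤ ∑' m : ℕ, (q : ℝ)⁻¹ * (2 / u * ((m + 1 : ℕ) : ℝ) ^ (-(1 + u / 2))) :=
        ((summable_nat_add_iff 1).mpr hs).tsum_le_tsum
          (fun m => vonMangoldtTerm_add_mul_succ_le hq hu j.val m)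
          (((summable_rpow_succ (half_pos hu)).mul_left _).mul_left _)
    _ ≤ (q : ℝ)⁻¹ * (8 / u ^ 2) := by
        rw [tsum_mul_left, tsum_mul_left]
        gcongr
        exact two_div_mul_tsum_rpow_succ_le hu hu1
    _ = 8 / (q * u ^ 2) := by rw [inv_mul_eq_div, div_div, mul_comm]

lemma tsum_indicator_vonMangoldtTerm_le {r : ℕ} [Fact q.Prime] (hq : 3 ≤ q) (hr : 1 ≤ r)
    (hu : 0 < u) (hu1 : u ≤ 1) :
    ∑' n, {n : ℕ | (n : ZMod q) ^ r = -1}.indicator (vonMangoldtTerm u) n ≤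
      4 * rootErrorTerm q r + r * (8 / (q * u ^ 2)) := by
  set A : Set ℕ := {n : ℕ | (n : ZMod q) ^ r = -1} with hA
  set T := Finset.univ.filter fun j : ZMod q => j ^ r = -1
  have hclass (j : ZMod q) : ∑' m : ℕ, A.indicator (vonMangoldtTerm u) (j.val + q * m) ≤
      if j ^ r = -1 then Real.log q * (j.val : ℝ)⁻¹ + 8 / (q * u ^ 2) else 0 := by
    have hmem (m : ℕ) : j.val + q * m ∈ A ↔ j ^ r = -1 := by
      simp [hA]
    simp only [Set.indicator_apply, hmem]
    split_ifs with h
    · refine tsum_vonMangoldtTerm_add_mul_le ?_ hu hu1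
      rintro rfl
      rw [zero_pow (by omega), zero_eq_neg] at h
      exact zero_ne_one h.symm
    · simp
  have hcard : (T.card : ℝ) ≤ r := Nat.cast_le.mpr (card_filter_pow_eq_le hr (-1))
  have hroots : ∑ j ∈ T, (j.val : ℝ)⁻¹ ≤ 2 * r / (q : ℝ) ^ ((1 : ℝ) / r) :=
    calc ∑ j ∈ T, (j.val : ℝ)⁻¹ ≤ T.card • (2 / (q : ℝ) ^ ((1 : ℝ) / r)) :=
          Finset.sum_le_card_nsmul _ _ _ fun j hj =>
            inv_val_le_of_pow_eq_neg_one (by omega) hr (Finset.mem_filter.mp hj).2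
      _ ≤ r * (2 / (q : ℝ) ^ ((1 : ℝ) / r)) := by rw [nsmul_eq_mul]; gcongr
      _ = 2 * r / (q : ℝ) ^ ((1 : ℝ) / r) := by ring
  rw [Nat.sumByResidueClasses ((summable_vonMangoldtTerm hu).indicator A) q]
  refine (Finset.sum_le_sum fun j _ => hclass j).trans ?_
  rw [← Finset.sum_filter, Finset.sum_add_distrib, ← Finset.mul_sum, Finset.sum_const,
    nsmul_eq_mul]
  exact add_le_add (log_mul_le_rootErrorTerm hq hr hroots (sum_inv_val_le hq T)) (by gcongr)

end VonMangoldtTerm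

/-! ### Extrapolation to `s = 1` -/

section FwdDiff

open scoped fwdDiff

variable {E A : Type*} [SeminormedAddCommGroup E] [AddCommMonoid A] {f : A → E} {δ y : A} {M : ℝ}

lemma norm_fwdDiff_iter_sub_le {n : ℕ} (hM : ∀ k, 1 ≤ k → k ≤ n → ‖f (y + k • δ)‖ ≤ M) :
    ‖(Δ_[δ])^[n] f y - (-1 : ℤ) ^ n • f y‖ ≤ (2 ^ n - 1) * M := by
  have hchoose : ∑ k ∈ Finset.range n, (n.choose (k + 1) : ℝ) = 2 ^ n - 1 := by
    have h := Nat.sum_range_choose n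
    rw [Finset.sum_range_succ', Nat.choose_zero_right] at h
    rw [eq_sub_iff_add_eq]
    exact_mod_cast h
  rw [fwdDiff_iter_eq_sum_shift, Finset.sum_range_succ', zero_smul, add_zero, Nat.sub_zero,
    Nat.choose_zero_right, Nat.cast_one, mul_one, add_sub_cancel_right, ← hchoose, Finset.sum_mul]
  refine norm_sum_le_of_le _ fun k hk => ?_
  have hk' := hM (k + 1) (by omega) (Finset.mem_range.mp hk)
  calc _ = ‖n.choose (k + 1) • f (y + (k + 1) • δ)‖ := by
        rw [mul_smul, natCast_zsmul, norm_isUnit_zsmul _ (isUnit_one.neg.pow _)]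
    _ ≤ n.choose (k + 1) * ‖f (y + (k + 1) • δ)‖ := norm_nsmul_le
    _ ≤ n.choose (k + 1) * M := by gcongr

lemma norm_fwdDiff_iter_le_add {n : ℕ} (hM : ∀ k, 1 ≤ k → k ≤ n → ‖f (y + k • δ)‖ ≤ M) :
    ‖(Δ_[δ])^[n] f y‖ ≤ ‖f y‖ + (2 ^ n - 1) * M := by
  have h := norm_add_le ((Δ_[δ])^[n] f y - (-1 : ℤ) ^ n • f y) ((-1 : ℤ) ^ n • f y)
  rw [sub_add_cancel, norm_isUnit_zsmul _ (isUnit_one.neg.pow n)] at h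
  linarith [norm_fwdDiff_iter_sub_le hM]

lemma norm_le_norm_fwdDiff_iter_add {n : ℕ}
    (hM : ∀ k, 1 ≤ k → k ≤ n → ‖f (y + k • δ)‖ ≤ M) :
    ‖f y‖ ≤ ‖(Δ_[δ])^[n] f y‖ + (2 ^ n - 1) * M := by
  have h := norm_sub_norm_le ((-1 : ℤ) ^ n • f y) ((Δ_[δ])^[n] f y)
  rw [norm_isUnit_zsmul _ (isUnit_one.neg.pow n), norm_sub_rev] at h
  linarith [norm_fwdDiff_iter_sub_le hM]

end FwdDiff

section Extrapolation

open scoped fwdDiff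

variable {q : ℕ} {δ : ℝ}

lemma norm_fwdDiff_logDeriv_le_of_sq_ne_one [NeZero q] (hq : 3 ≤ q)
    {χ : DirichletCharacter ℂ q} (hχ : χ ^ 2 ≠ 1) (hδ : 0 ≤ δ) (hδx : δ ≤ zeroFreeRadius q ^ 4) :
    ‖(Δ_[(δ : ℂ)])^[3] (logDeriv χ.LFunction) 1‖ ≤ 172 * δ ^ 2 := by
  have hx := zeroFreeRadius_pos hq
  have hx1 := zeroFreeRadius_le hq
  set x := zeroFreeRadius q
  have hδ7 : δ ≤ x / 7 :=
    calc δ ≤ x * x ^ 3 := hδx.trans_eq (by ring)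
      _ ≤ x * (1 / 2 ^ 40) ^ 3 := by gcongr
      _ ≤ x / 7 := by rw [div_eq_mul_one_div x 7]; gcongr; norm_num
  have hd : Differentiable ℂ χ.LFunction :=
    DirichletCharacter.differentiable_LFunction fun h => hχ (by rw [h, one_pow])
  have hball : ∀ s ∈ Metric.ball (1 : ℂ) x, ‖s - 1‖ ≤ zeroFreeRadius q := fun s hs =>
    (mem_ball_iff_norm.mp hs).le
  have h := norm_fwdDiff_iter_le_of_ball (f := logDeriv χ.LFunction) (ρ := x / 7) (δ := (δ : ℂ))
    (by positivity) (by rwa [Complex.norm_of_nonneg hδ]) 3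
    (fun s hs => (hd.deriv.differentiableAt.div hd.differentiableAt
      (LFunction_ne_zero_of_sq_ne_one hq hχ (hball s hs))).differentiableWithinAt)
    (fun s hs => norm_logDeriv_LFunction_le_of_sq_ne_one hq hχ (hball s hs)) 1
    (Metric.mem_ball_self (by push_cast; linarith))
  rw [Complex.norm_of_nonneg hδ] at h
  calc _ ≤ 1 / (2 * x) * (δ / (x / 7)) ^ 3 := h
    _ = 343 / 2 * (δ / x ^ 4) * δ ^ 2 := by field_simp; ring
    _ ≤ 343 / 2 * 1 * δ ^ 2 := by
        gcongr
        exact div_le_one_of_le₀ hδx (by positivity)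
    _ ≤ 172 * δ ^ 2 := by linarith [sq_nonneg δ]

lemma norm_fwdDiff_logDeriv_le_of_sq_eq_one [Fact q.Prime] (hq : 3 ≤ q)
    {χ : DirichletCharacter ℂ q} (hχ : χ ≠ 1) (hχ2 : χ ^ 2 = 1) (hδ : 0 < δ) (hδ1 : 3 * δ ≤ 1) :
    ‖(Δ_[(δ : ℂ)])^[3] (logDeriv χ.LFunction) 1‖ ≤
      40960 * √q * Real.log q ^ 2 + 56 / δ ^ 2 := by
  have hshift : ∀ k : ℕ, 1 ≤ k → k ≤ 3 → ‖logDeriv χ.LFunction (1 + k • (δ : ℂ))‖ ≤ 8 / δ ^ 2 := by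
    intro k hk hk3
    have hk' : (1 : ℝ) ≤ k := mod_cast hk
    have hk3' : (k : ℝ) ≤ 3 := mod_cast hk3
    have h := norm_logDeriv_LFunction_le χ (u := k * δ) (by positivity) (by nlinarith)
    rw [nsmul_eq_mul]
    push_cast at h
    exact h.trans (by gcongr; exact le_mul_of_one_le_left hδ.le hk')
  refine (norm_fwdDiff_iter_le_add hshift).trans ?_
  refine add_le_add (norm_logDeriv_LFunction_one_le_of_sq_eq_one hq hχ hχ2) (le_of_eq ?_)
  ring

variable [Fact q.Prime] {r : ℕ} {b : ZMod q}

lemma norm_sum_mul_fwdDiff_logDeriv_le (hq : 3 ≤ q) (hrq : r ∣ q - 1) (b : ZMod q) (hδ : 0 < δ)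
    (hδx : δ ≤ zeroFreeRadius q ^ 4) (hδ1 : 3 * δ ≤ 1) :
    ‖∑ χ ∈ (charsTrivialOnRoots q r).erase 1, χ b * (Δ_[(δ : ℂ)])^[3] (logDeriv χ.LFunction) 1‖ ≤
      ((q - 1) / r : ℕ) * (172 * δ ^ 2) +
        2 * (40960 * √q * Real.log q ^ 2 + 56 / δ ^ 2) := by
  set Y := (charsTrivialOnRoots q r).erase 1
  have hterm : ∀ χ ∈ Y, ‖χ b * (Δ_[(δ : ℂ)])^[3] (logDeriv χ.LFunction) 1‖ ≤
      172 * δ ^ 2 + if χ ^ 2 = 1 then 40960 * √q * Real.log q ^ 2 + 56 / δ ^ 2 else 0 := by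
    intro χ hχ
    rw [norm_mul]
    refine (mul_le_of_le_one_left (norm_nonneg _) (χ.norm_le_one b)).trans ?_
    split_ifs with hχ2
    · exact (norm_fwdDiff_logDeriv_le_of_sq_eq_one hq (Finset.ne_of_mem_erase hχ) hχ2 hδ
        hδ1).trans (le_add_of_nonneg_left (by positivity))
    · simpa only [add_zero] using norm_fwdDiff_logDeriv_le_of_sq_ne_one hq hχ2 hδ.le hδx
  refine (norm_sum_le_of_le _ hterm).trans ?_
  rw [Finset.sum_add_distrib, ← Finset.sum_filter, Finset.sum_const, Finset.sum_const,
    nsmul_eq_mul, nsmul_eq_mul]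
  gcongr
  · exact (Finset.card_le_card (Finset.erase_subset _ _)).trans (card_charsTrivialOnRoots_le hrq)
  · exact_mod_cast card_filter_sq_eq_one_le Y

lemma norm_sum_mul_logDeriv_one_add_le (hq : 3 ≤ q) (hr : 1 ≤ r) (hrq : r ∣ q - 1)
    (hb : b ^ r = -1) (hδ : 0 < δ) {u : ℝ} (hu : δ ≤ u) (hu1 : u ≤ 1) :
    ‖∑ χ ∈ (charsTrivialOnRoots q r).erase 1, χ b * logDeriv χ.LFunction (1 + u)‖ ≤
      ((q - 1) / r : ℕ) * (4 * rootErrorTerm q r + r * (8 / (q * δ ^ 2))) + 8 / δ ^ 2 := by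
  have hu0 := hδ.trans_le hu
  have : (0 : ℝ) < q := by positivity
  refine (norm_sum_mul_logDeriv_le (by omega) hrq hb hu0 hu1).trans ?_
  gcongr
  exact (tsum_indicator_vonMangoldtTerm_le hq hr hu0 hu1).trans (by gcongr)

lemma norm_sum_mul_logDeriv_one_le (hq : 3 ≤ q) (hr : 1 ≤ r) (hrq : r ∣ q - 1)
    (hb : b ^ r = -1) (hδ : 0 < δ) (hδx : δ ≤ zeroFreeRadius q ^ 4) (hδ1 : 3 * δ ≤ 1) :
    ‖∑ χ ∈ (charsTrivialOnRoots q r).erase 1, χ b * logDeriv χ.LFunction 1‖ ≤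
      ((q - 1) / r : ℕ) * (28 * rootErrorTerm q r + 56 * r / (q * δ ^ 2) + 172 * δ ^ 2) +
        81920 * √q * Real.log q ^ 2 + 168 / δ ^ 2 := by
  set Y := (charsTrivialOnRoots q r).erase 1
  set F : ℂ → ℂ := ∑ χ ∈ Y, χ b • logDeriv χ.LFunction with hFdef
  have hF (s : ℂ) : F s = ∑ χ ∈ Y, χ b * logDeriv χ.LFunction s := by
    simp only [hFdef, Finset.sum_apply, Pi.smul_apply, smul_eq_mul]
  have hΔF : (Δ_[(δ : ℂ)])^[3] F 1 =
      ∑ χ ∈ Y, χ b * (Δ_[(δ : ℂ)])^[3] (logDeriv χ.LFunction) 1 := by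
    simp only [hFdef, fwdDiff_iter_finsetSum, fwdDiff_iter_const_smul, Finset.sum_apply,
      Pi.smul_apply, smul_eq_mul]
  have hshift : ∀ k : ℕ, 1 ≤ k → k ≤ 3 → ‖F (1 + k • (δ : ℂ))‖ ≤
      ((q - 1) / r : ℕ) * (4 * rootErrorTerm q r + r * (8 / (q * δ ^ 2))) + 8 / δ ^ 2 := by
    intro k hk hk3
    have hk' : (1 : ℝ) ≤ k := mod_cast hk
    have hk3' : (k : ℝ) ≤ 3 := mod_cast hk3
    have h := norm_sum_mul_logDeriv_one_add_le (u := k * δ) hq hr hrq hb hδ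
      (le_mul_of_one_le_left hδ.le hk') (by nlinarith)
    rw [hF, nsmul_eq_mul]
    exact_mod_cast h
  rw [← hF]
  refine (norm_le_norm_fwdDiff_iter_add hshift).trans ?_
  rw [hΔF]
  refine (add_le_add_left (norm_sum_mul_fwdDiff_logDeriv_le hq hrq b hδ hδx hδ1) _).trans
    (le_of_eq ?_)
  ring

end Extrapolation

/-- The error term of the theorem. -/
noncomputable def errorTerm (q r : ℕ) : ℝ :=
  rootErrorTerm q r + r * Real.log q ^ 2 / √q

section ErrorTerm

variable {q r : ℕ}

lemma errorTerm_pos (hq : 3 ≤ q) (hr : 1 ≤ r) : 0 < errorTerm q r := by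
  have := one_le_log_natCast hq
  have := rootErrorTerm_nonneg hq r
  rw [errorTerm]
  positivity

lemma mul_log_sq_div_sqrt_le_errorTerm (hq : 3 ≤ q) (r : ℕ) :
    r * Real.log q ^ 2 / √q ≤ errorTerm q r :=
  le_add_of_nonneg_left (rootErrorTerm_nonneg hq r)

lemma rootErrorTerm_le_errorTerm (q r : ℕ) : rootErrorTerm q r ≤ errorTerm q r :=
  le_add_of_nonneg_right (by positivity)

lemma natCast_div_sqrt_le_errorTerm (hq : 3 ≤ q) (r : ℕ) : r / √q ≤ errorTerm q r := by
  refine le_trans ?_ (mul_log_sq_div_sqrt_le_errorTerm hq r)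
  gcongr
  exact le_mul_of_one_le_right (by positivity) (one_le_pow₀ (one_le_log_natCast hq))

lemma sqrt_mul_inv_natCast_div_le (hq : 2 ≤ q) (hrq : r ∣ q - 1) :
    √(q : ℝ) * (((q - 1) / r : ℕ) : ℝ)⁻¹ ≤ 2 * (r / √q) := by
  have hq2 : (2 : ℝ) ≤ q := mod_cast hq
  have hmul : (((q - 1) / r : ℕ) : ℝ) * r = q - 1 := by
    rw [← Nat.cast_mul, Nat.div_mul_cancel hrq, Nat.cast_sub (by omega), Nat.cast_one]
  have hh : (0 : ℝ) < ((q - 1) / r : ℕ) :=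
    pos_of_mul_pos_left (hmul.symm ▸ by linarith : (0 : ℝ) < _) r.cast_nonneg
  rw [← mul_div_assoc, ← div_eq_mul_inv, div_le_div_iff₀ hh (by positivity),
    Real.mul_self_sqrt (by positivity), mul_assoc, mul_comm (r : ℝ), hmul]
  linarith

end ErrorTerm

lemma inv_rpow_one_quarter_sq {x : ℝ} (hx : 0 ≤ x) :
    (x ^ ((1 : ℝ) / 4))⁻¹ ^ 2 = (√x)⁻¹ := by
  rw [inv_pow, ← Real.rpow_natCast, ← Real.rpow_mul hx, Real.sqrt_eq_rpow]
  norm_num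

lemma inv_mul_norm_sum_mul_logDeriv_one_le {q r : ℕ} [Fact q.Prime] (hq : 3 ≤ q) (hrq : r ∣ q - 1)
    {b : ZMod q} (hb : b ^ r = -1)
    (hqx : ((q : ℝ) ^ ((1 : ℝ) / 4))⁻¹ ≤ zeroFreeRadius q ^ 4) :
    (((q - 1) / r : ℕ) : ℝ)⁻¹ *
        ‖∑ χ ∈ (charsTrivialOnRoots q r).erase 1, χ b * logDeriv χ.LFunction 1‖ ≤
      200000 * errorTerm q r := by
  have hq0 : (0 : ℝ) < q := by positivity
  have hr : 1 ≤ r := Nat.pos_of_dvd_of_pos hrq (by omega)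
  have hr1 : (1 : ℝ) ≤ r := mod_cast hr
  have hh : (0 : ℝ) < ((q - 1) / r : ℕ) :=
    mod_cast Nat.div_pos (Nat.le_of_dvd (by omega) hrq) hr
  have hhinv := sqrt_mul_inv_natCast_div_le (by omega) hrq
  have hδ : 0 < ((q : ℝ) ^ ((1 : ℝ) / 4))⁻¹ := by positivity
  have hδ1 : 3 * ((q : ℝ) ^ ((1 : ℝ) / 4))⁻¹ ≤ 1 := by
    have : zeroFreeRadius q ^ 4 ≤ (1 / 2 ^ 40) ^ 4 :=
      pow_le_pow_left₀ (zeroFreeRadius_pos hq).le (zeroFreeRadius_le hq) 4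
    linarith
  have hmain := norm_sum_mul_logDeriv_one_le hq hr hrq hb hδ hqx hδ1
  rw [inv_rpow_one_quarter_sq hq0.le, ← div_eq_mul_inv (q : ℝ), Real.div_sqrt,
    div_inv_eq_mul] at hmain
  set h := ((q - 1) / r : ℕ)
  set L := Real.log q
  calc (h : ℝ)⁻¹ * _
      ≤ (h : ℝ)⁻¹ * (h * (28 * rootErrorTerm q r + 56 * r / √q + 172 * (√q)⁻¹) +
          81920 * √q * L ^ 2 + 168 * √q) := by gcongr
    _ = 28 * rootErrorTerm q r + 56 * (r / √q) + 172 * (1 / √q) +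
          (81920 * L ^ 2 + 168) * (√q * (h : ℝ)⁻¹) := by
        field_simp
        ring
    _ ≤ 28 * rootErrorTerm q r + 56 * (r / √q) + 172 * (r / √q) +
          (81920 * L ^ 2 + 168) * (2 * (r / √q)) := by gcongr
    _ = 28 * rootErrorTerm q r + 564 * (r / √q) + 163840 * (r * L ^ 2 / √q) := by ring
    _ ≤ 200000 * errorTerm q r := by
        linarith [rootErrorTerm_le_errorTerm q r, natCast_div_sqrt_le_errorTerm hq r,
          mul_log_sq_div_sqrt_le_errorTerm hq r, errorTerm_pos hq hr]

/-! ### The prime sum `S(r, q)` -/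

/-- The quantity `log (x ^ e) / x ^ e`, which measures the local terms of `S(r, q)`. -/
noncomputable def logDivPow (x : ℝ) (e : ℕ) : ℝ := e * Real.log x / x ^ e

section LogDivPow

variable {x : ℝ}

lemma logDivPow_nonneg (hx : 1 ≤ x) (e : ℕ) : 0 ≤ logDivPow x e := by
  have := Real.log_nonneg hx
  rw [logDivPow]
  positivity

lemma logDivPow_antitoneOn (hx : 2 ≤ x) : AntitoneOn (logDivPow x) (Set.Ici 1) := by
  intro a ha b _ hab
  have hlog : 0 ≤ Real.log x := Real.log_nonneg (by linarith)
  induction b, hab using Nat.le_induction with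
  | base => exact le_rfl
  | succ n hn ih =>
    have hn1 : (1 : ℝ) ≤ n := mod_cast (Set.mem_Ici.mp ha).trans hn
    refine le_trans ?_ (ih ((Set.mem_Ici.mp ha).trans hn))
    rw [logDivPow, logDivPow, div_le_div_iff₀ (by positivity) (by positivity), pow_succ]
    push_cast
    calc ((n : ℝ) + 1) * Real.log x * x ^ n ≤ n * 2 * Real.log x * x ^ n := by
          gcongr
          linarith
      _ ≤ n * x * Real.log x * x ^ n := by gcongr
      _ = n * Real.log x * (x ^ n * x) := by ring

lemma mul_log_div_pow_sub_one_mem_Icc (hx : 2 ≤ x) {n : ℕ} (hn : 1 ≤ n) :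
    n * Real.log x / (x ^ n - 1) ∈ Set.Icc 0 (2 * logDivPow x n) := by
  have hlog : 0 ≤ Real.log x := Real.log_nonneg (by linarith)
  have hpow : 2 ≤ x ^ n := hx.trans (le_self_pow₀ (by linarith) (by omega))
  refine ⟨div_nonneg (by positivity) (by linarith), ?_⟩
  have : 0 ≤ n * Real.log x := by positivity
  rw [logDivPow, ← mul_div_assoc, div_le_div_iff₀ (by linarith) (by linarith)]
  nlinarith

lemma abs_mul_log_div_pow_sub_one_sub_le (hx : 2 ≤ x) {n : ℕ} (hn : 2 ≤ n) :
    |n * Real.log x / (x ^ n - 1) - (n - 1) * Real.log x / (x ^ (n - 1) - 1)| ≤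
      2 * logDivPow x (n - 1) := by
  obtain ⟨h₁, h₁'⟩ := mul_log_div_pow_sub_one_mem_Icc hx (n := n) (by omega)
  obtain ⟨h₂, h₂'⟩ := mul_log_div_pow_sub_one_mem_Icc hx (n := n - 1) (by omega)
  have h₃ := logDivPow_antitoneOn hx (a := n - 1) (b := n) (Set.mem_Ici.mpr (by omega))
    (Set.mem_Ici.mpr (by omega)) (by omega)
  rw [Nat.cast_sub (by omega), Nat.cast_one] at h₂ h₂'
  rw [abs_le]
  constructor <;> linarith

lemma log_div_pow_sub_inv_mem_Icc (hx : 2 ≤ x) {m : ℕ} (hm : 2 ≤ m) :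
    Real.log x / (x ^ m - (x ^ m)⁻¹) ∈ Set.Icc 0 (logDivPow x m) := by
  have hlog : 0 ≤ Real.log x := Real.log_nonneg (by linarith)
  have hm' : (2 : ℝ) ≤ m := mod_cast hm
  have hpow : 2 ≤ x ^ m := hx.trans (le_self_pow₀ (by linarith) (by omega))
  have hinv : (x ^ m)⁻¹ ≤ 1 := inv_le_one_of_one_le₀ (by linarith)
  refine ⟨div_nonneg hlog (by linarith), ?_⟩
  rw [logDivPow, div_le_div_iff₀ (by linarith) (by linarith)]
  calc Real.log x * x ^ m ≤ Real.log x * (2 * (x ^ m - (x ^ m)⁻¹)) := by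
        gcongr
        linarith
    _ ≤ Real.log x * (m * (x ^ m - (x ^ m)⁻¹)) := by
        gcongr
        linarith
    _ = m * Real.log x * (x ^ m - (x ^ m)⁻¹) := by ring

lemma logDivPow_two_le {n : ℕ} (hn : 1 ≤ n) : logDivPow n 2 ≤ 4 * (n : ℝ) ^ (-(3 / 2) : ℝ) := by
  have hn0 : (0 : ℝ) < n := mod_cast hn
  have hsqrt : (n : ℝ) ^ (-(3 / 2) : ℝ) = √n / (n : ℝ) ^ 2 := by
    rw [Real.sqrt_eq_rpow, ← Real.rpow_natCast (n : ℝ) 2, ← Real.rpow_sub hn0]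
    norm_num
  have hlog : (2 : ℕ) * Real.log n ≤ 4 * √(n : ℝ) := by
    push_cast
    linarith [log_le_two_mul_sqrt hn0.le]
  rw [logDivPow, hsqrt, ← mul_div_assoc]
  exact div_le_div_of_nonneg_right hlog (by positivity)

lemma logDivPow_le {p e : ℕ} (hp : 2 ≤ p) (he : 2 ≤ e) :
    logDivPow p e ≤ 4 * (p : ℝ) ^ (-(3 / 2) : ℝ) :=
  (logDivPow_antitoneOn (mod_cast hp) (Set.mem_Ici.mpr one_le_two)
    (Set.mem_Ici.mpr (by omega)) he).trans (logDivPow_two_le (by omega))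

end LogDivPow

section LocalTerm

variable {q r p : ℕ}

lemma abs_Sterm_le_of_gp_eq_one (hq : 3 ≤ q) (hp : 2 ≤ p) (hpq : p ≠ q) (hg : gp q r p = 1) :
    |Sterm q r p| ≤ 2 * logDivPow p (q - 1) := by
  simpa [Sterm, hpq, hg] using
    abs_mul_log_div_pow_sub_one_sub_le (x := p) (mod_cast hp) (n := q) (by omega)

lemma abs_Sterm_le_of_gp_eq_two (hp : 2 ≤ p) (hpq : p ≠ q) (hg : gp q r p = 2) :
    |Sterm q r p| ≤ logDivPow p 2 := by
  obtain ⟨h, h'⟩ := mul_log_div_pow_sub_one_mem_Icc (x := p) (mod_cast hp) one_le_two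
  rw [Nat.cast_ofNat, mul_div_assoc] at h h'
  have hSterm : Sterm q r p = Real.log p / ((p : ℝ) ^ 2 - 1) := by
    simp [Sterm, hpq, hg]
  rw [hSterm, abs_of_nonneg (by linarith)]
  linarith

lemma abs_Sterm_le_of_odd_gp (hp : 2 ≤ p) (hpq : p ≠ q) (hg : 3 ≤ gp q r p)
    (hodd : ¬ 2 ∣ gp q r p) : |Sterm q r p| ≤ 2 * logDivPow p (gp q r p - 1) := by
  have hSterm : Sterm q r p = (gp q r p : ℝ) * Real.log p / ((p : ℝ) ^ gp q r p - 1)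
      - ((gp q r p : ℝ) - 1) * Real.log p / ((p : ℝ) ^ (gp q r p - 1) - 1) := by
    rw [Sterm, if_neg hpq, if_neg (by omega), if_pos hg, if_neg (by omega),
      if_neg fun h => hodd h.2, zero_add, add_zero, add_zero]
  rw [hSterm]
  exact abs_mul_log_div_pow_sub_one_sub_le (mod_cast hp) (by omega)

lemma abs_Sterm_le_of_gp_eq_two_mul (hp : 2 ≤ p) (hpq : p ≠ q) {m : ℕ} (hm : 2 ≤ m)
    (hg : gp q r p = 2 * m) : |Sterm q r p| ≤ 3 * logDivPow p m := by
  have hp' : (2 : ℝ) ≤ p := mod_cast hp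
  have h₁ := abs_mul_log_div_pow_sub_one_sub_le hp' (n := 2 * m) (by omega)
  have h₂ := logDivPow_antitoneOn hp' (a := m) (b := 2 * m - 1) (Set.mem_Ici.mpr (by omega))
    (Set.mem_Ici.mpr (by omega)) (by omega)
  obtain ⟨h₃, h₃'⟩ := log_div_pow_sub_inv_mem_Icc hp' hm
  rw [Sterm, if_neg hpq, hg, if_neg (by omega), if_pos (by omega), if_neg (by omega),
    if_pos ⟨by omega, dvd_mul_right 2 m⟩, Nat.mul_div_cancel_left m two_pos, zero_add, add_zero]
  rw [abs_le] at h₁ ⊢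
  constructor <;> linarith

lemma pow_mul_eq_one_of_gp_dvd {k : ℕ} (h : gp q r p ∣ k) : (p : ZMod q) ^ (r * k) = 1 := by
  rw [pow_mul]
  exact orderOf_dvd_iff_pow_eq_one.mp h

lemma gp_pos [Fact q.Prime] (hp : p.Prime) (hpq : p ≠ q) : 0 < gp q r p := by
  have hq : 0 < q - 1 := Nat.sub_pos_of_lt (Fact.out : q.Prime).one_lt
  have hp0 : (p : ZMod q) ≠ 0 := by
    rw [Ne, ZMod.natCast_eq_zero_iff, Nat.prime_dvd_prime_iff_eq Fact.out hp]
    exact hpq.symm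
  rw [gp, orderOf_pos_iff, isOfFinOrder_iff_pow_eq_one]
  exact ⟨q - 1, hq, by rw [pow_right_comm, ZMod.pow_card_sub_one_eq_one hp0, one_pow]⟩

lemma le_pow_of_gp_eq_one (hr : 1 ≤ r) (hp : 2 ≤ p) (hg : gp q r p = 1) : q ≤ p ^ r := by
  have hpow : (p : ZMod q) ^ r = 1 := orderOf_eq_one_iff.mp hg
  have hlt : 1 < p ^ r := Nat.one_lt_pow (by omega) hp
  have hdvd : q ∣ p ^ r - 1 := by
    rw [← ZMod.natCast_eq_zero_iff, Nat.cast_sub hlt.le, Nat.cast_pow, hpow, Nat.cast_one, sub_self]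
  exact (Nat.le_of_dvd (by omega) hdvd).trans (Nat.sub_le _ _)

lemma le_two_mul_pow_of_two_le_gp [Fact q.Prime] (hr : 1 ≤ r) (hp : 2 ≤ p) (hg : 2 ≤ gp q r p) :
    q ≤ 2 * p ^ ((gp q r p - 1) * r) := by
  have hne : (p : ZMod q) ^ r ≠ 1 := fun h => by
    rw [gp, h, orderOf_one] at hg
    omega
  have hgeom : ∑ i ∈ Finset.range (gp q r p), ((p : ZMod q) ^ r) ^ i = 0 := by
    have h := geom_sum_mul ((p : ZMod q) ^ r) (gp q r p)
    rw [gp, pow_orderOf_eq_one, sub_self] at h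
    exact (mul_eq_zero.mp h).resolve_right (sub_ne_zero.mpr hne)
  have hdvd : q ∣ ∑ i ∈ Finset.range (gp q r p), (p ^ r) ^ i := by
    rw [← ZMod.natCast_eq_zero_iff]
    exact_mod_cast hgeom
  have hle := Nat.le_of_dvd (Finset.sum_pos (fun i _ => by positivity)
    (Finset.nonempty_range_iff.mpr (by omega))) hdvd
  obtain ⟨m, hm⟩ : ∃ m, gp q r p = m + 1 := ⟨gp q r p - 1, by omega⟩
  have hlt := Nat.geomSum_lt (hp.trans (Nat.le_self_pow (by omega : r ≠ 0) p))
    (s := Finset.range m) (n := m) fun k hk => Finset.mem_range.mp hk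
  rw [hm, Finset.sum_range_succ] at hle
  rw [hm, Nat.add_sub_cancel, mul_comm m r, pow_mul]
  omega

lemma le_two_mul_pow_of_gp_eq_two_mul [Fact q.Prime] (hp : 2 ≤ p) {m : ℕ} (hm : 1 ≤ m)
    (hg : gp q r p = 2 * m) : q ≤ 2 * p ^ (m * r) := by
  have hsq : (((p : ZMod q) ^ r) ^ m) ^ 2 = 1 := by
    rw [← pow_mul, mul_comm, ← hg]
    exact pow_orderOf_eq_one _
  have hne : ((p : ZMod q) ^ r) ^ m ≠ 1 := fun h => by
    have := Nat.le_of_dvd hm (orderOf_dvd_of_pow_eq_one h)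
    rw [← gp, hg] at this
    omega
  have hdvd : q ∣ p ^ (m * r) + 1 := by
    rw [← ZMod.natCast_eq_zero_iff]
    push_cast
    rw [mul_comm, pow_mul, (sq_eq_one_iff.mp hsq).resolve_left hne, neg_add_cancel]
  have := Nat.le_of_dvd (Nat.succ_pos _) hdvd
  have := Nat.one_le_pow (m * r) p (by omega)
  omega

lemma exists_abs_Sterm_le [Fact q.Prime] (hq : 3 ≤ q) (hr : 1 ≤ r) (hp : p.Prime) (hpq : p ≠ q) :
    ∃ e : ℕ, 2 ≤ e ∧ |Sterm q r p| ≤ 3 * logDivPow p e ∧ q ≤ 2 * p ^ (e * r) ∧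
      (gp q r p ∣ 2 * e ∨ gp q r p ∣ e + 1) := by
  have hp2 := hp.two_le
  have hnonneg := logDivPow_nonneg (x := p) (mod_cast hp.one_le)
  have hgpos : 0 < gp q r p := gp_pos hp hpq
  obtain hg | hg | ⟨hg, hodd⟩ | ⟨hg, m, hm⟩ : gp q r p = 1 ∨ gp q r p = 2 ∨
      (3 ≤ gp q r p ∧ ¬ 2 ∣ gp q r p) ∨ (4 ≤ gp q r p ∧ 2 ∣ gp q r p) := by omega
  · refine ⟨q - 1, by omega, ?_, ?_, Or.inl (by rw [hg]; exact one_dvd _)⟩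
    · linarith [abs_Sterm_le_of_gp_eq_one hq hp2 hpq hg, hnonneg (q - 1)]
    · have := le_pow_of_gp_eq_one hr hp2 hg
      have := Nat.pow_le_pow_right hp.pos (Nat.le_mul_of_pos_left r (by omega : 0 < q - 1))
      omega
  · refine ⟨2, le_rfl, ?_, ?_, Or.inl (by rw [hg]; exact dvd_mul_right 2 2)⟩
    · linarith [abs_Sterm_le_of_gp_eq_two hp2 hpq hg, hnonneg 2]
    · have := le_two_mul_pow_of_gp_eq_two_mul hp2 le_rfl hg
      have := Nat.pow_le_pow_right hp.pos (Nat.mul_le_mul_right r one_le_two)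
      omega
  · refine ⟨gp q r p - 1, by omega, ?_, le_two_mul_pow_of_two_le_gp hr hp2 (by omega),
      Or.inr (by rw [Nat.sub_add_cancel hgpos])⟩
    linarith [abs_Sterm_le_of_odd_gp hp2 hpq hg hodd, hnonneg (gp q r p - 1)]
  · exact ⟨m, by omega, abs_Sterm_le_of_gp_eq_two_mul hp2 hpq (by omega) hm,
      le_two_mul_pow_of_gp_eq_two_mul hp2 (by omega) hm, Or.inl hm.dvd⟩

end LocalTerm

lemma summable_rpow_three_halves : Summable fun n : ℕ => (n : ℝ) ^ (-(3 / 2) : ℝ) :=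
  Real.summable_nat_rpow.mpr (by norm_num)

lemma tsum_rpow_three_halves_le : ∑' n : ℕ, (n : ℝ) ^ (-(3 / 2) : ℝ) ≤ 3 := by
  have h := tsum_rpow_succ_le (x := 1 / 2) (by norm_num)
  rw [summable_rpow_three_halves.tsum_eq_zero_add]
  norm_num at h ⊢
  exact h

lemma hasSum_indicator_const {α : Type*} (s : Finset α) (c : ℝ) :
    HasSum ((s : Set α).indicator fun _ => c) (s.card * c) := by
  rw [← hasSum_subtype_iff_indicator, ← nsmul_eq_mul, ← Finset.sum_const]
  exact s.hasSum _

lemma tsum_indicator_Ioi_rpow_three_halves_le {N : ℕ} (hN : 1 ≤ N) :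
    ∑' n : ℕ, (Set.Ioi N).indicator (fun n : ℕ => (n : ℝ) ^ (-(3 / 2) : ℝ)) n ≤ 2 / √N := by
  have h := tsum_rpow_tail_le (x := 1 / 2) (by norm_num) hN
  rw [← (summable_rpow_three_halves.indicator _).sum_add_tsum_nat_add (N + 1),
    Finset.sum_eq_zero fun n hn => Set.indicator_of_notMem
      (by simpa [Nat.lt_succ_iff] using hn) _, zero_add]
  calc ∑' n : ℕ, (Set.Ioi N).indicator (fun n : ℕ => (n : ℝ) ^ (-(3 / 2) : ℝ)) (n + (N + 1))
      = ∑' n : ℕ, ((N + n + 1 : ℕ) : ℝ) ^ (-(1 + 1 / 2) : ℝ) := by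
        refine tsum_congr fun n => ?_
        rw [Set.indicator_of_mem (Set.mem_Ioi.mpr (by omega)), show n + (N + 1) = N + n + 1 by ring]
        norm_num
    _ ≤ (N : ℝ) ^ (-(1 / 2) : ℝ) / (1 / 2) := h
    _ = 2 / √N := by
        rw [Real.rpow_neg (by positivity), ← Real.sqrt_eq_rpow]
        field_simp

lemma abs_Smq_le {q r : ℕ} {B : ℕ → ℝ} (hB : Summable B) (hB0 : ∀ n, 0 ≤ B n)
    (h : ∀ p : ℕ, p.Prime → |Sterm q r p| ≤ B p) : |Smq q r| ≤ ∑' n, B n := by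
  have hsum : Summable fun p : Nat.Primes => B p :=
    hB.comp_injective Nat.Primes.coe_nat_injective
  rw [Smq, ← Real.norm_eq_abs]
  exact (tsum_of_norm_bounded hsum.hasSum fun p => h p p.2).trans
    (tsum_comp_le_tsum_of_inj hB hB0 Nat.Primes.coe_nat_injective)

lemma abs_Smq_le_of_logDivPow_le {q r : ℕ} [Fact q.Prime] (hq : 3 ≤ q) (hr : 1 ≤ r) {B : ℕ → ℝ}
    (hB : Summable B) (hB0 : ∀ n, 0 ≤ B n)
    (h : ∀ p e : ℕ, p.Prime → p ≠ q → 2 ≤ e → q ≤ 2 * p ^ (e * r) →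
      (gp q r p ∣ 2 * e ∨ gp q r p ∣ e + 1) → logDivPow p e ≤ B p) :
    |Smq q r| ≤ 3 * ∑' n, B n := by
  rw [← tsum_mul_left]
  refine abs_Smq_le (hB.mul_left 3) (fun n => mul_nonneg three_pos.le (hB0 n)) fun p hp => ?_
  by_cases hpq : p = q
  · rw [Sterm, if_pos hpq, abs_zero]
    exact mul_nonneg three_pos.le (hB0 p)
  · obtain ⟨e, he, hle, hqp, hord⟩ := exists_abs_Sterm_le hq hr hp hpq
    exact hle.trans (mul_le_mul_of_nonneg_left (h p e hp hpq he hqp hord) three_pos.le)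

lemma log_log_natCast_le {q : ℕ} (hq : 3 ≤ q) : Real.log (Real.log q) ≤ Real.log q :=
  Real.log_le_self (zero_le_one.trans (one_le_log_natCast hq))

lemma inv_rpow_le_rootErrorTerm {q : ℕ} (hq : 3 ≤ q) (r : ℕ) :
    ((q : ℝ) ^ ((1 : ℝ) / r))⁻¹ ≤ rootErrorTerm q r := by
  have hL := one_le_log_natCast hq
  have hl := log_log_natCast_pos hq
  have hlL : Real.log (Real.log q) ≤ Real.log q ^ 3 :=
    (log_log_natCast_le hq).trans (le_self_pow₀ hL three_ne_zero)
  rw [rootErrorTerm, inv_eq_one_div, div_le_div_iff₀ (by positivity) (by positivity), one_mul,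
    mul_comm]
  gcongr

lemma abs_Smq_le_of_log_lt {q r : ℕ} [Fact q.Prime] (hq : 3 ≤ q) (hr : Real.log q < r) :
    |Smq q r| ≤ 108 * rootErrorTerm q r := by
  have hL := one_le_log_natCast hq
  have hq0 : (0 : ℝ) < q := by positivity
  have hr0 : (0 : ℝ) < r := by linarith
  have hS : |Smq q r| ≤ 3 * ∑' n : ℕ, 4 * (n : ℝ) ^ (-(3 / 2) : ℝ) :=
    abs_Smq_le_of_logDivPow_le hq (mod_cast hr0) (summable_rpow_three_halves.mul_left 4)
      (fun n => by positivity) fun p e hp _ he _ _ => logDivPow_le hp.two_le he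
  rw [tsum_mul_left] at hS
  have hroot : (q : ℝ) ^ ((1 : ℝ) / r) ≤ 3 :=
    calc (q : ℝ) ^ ((1 : ℝ) / r) = Real.exp (Real.log q / r) := by
          rw [Real.rpow_def_of_pos hq0, mul_one_div]
      _ ≤ Real.exp 1 := Real.exp_le_exp.mpr ((div_le_one hr0).mpr hr.le)
      _ ≤ 3 := Real.exp_one_lt_three.le
  have hinv : 3⁻¹ ≤ ((q : ℝ) ^ ((1 : ℝ) / r))⁻¹ := inv_anti₀ (by positivity) hroot
  linarith [tsum_rpow_three_halves_le, inv_rpow_le_rootErrorTerm hq r]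

section SmallExponent

variable {q r : ℕ}

lemma rpow_inv_le_two_mul_pow {p e : ℕ} (hr : 1 ≤ r) (h : q ≤ 2 * p ^ (e * r)) :
    (q : ℝ) ^ ((1 : ℝ) / r) ≤ 2 * (p : ℝ) ^ e := by
  have hr0 : (0 : ℝ) < r := mod_cast hr
  rw [one_div, Real.rpow_inv_le_iff_of_pos (by positivity) (by positivity) hr0,
    Real.rpow_natCast, mul_pow, ← pow_mul]
  calc (q : ℝ) ≤ 2 * (p : ℝ) ^ (e * r) := mod_cast h
    _ ≤ 2 ^ r * (p : ℝ) ^ (e * r) := by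
      gcongr
      exact le_self_pow₀ one_le_two (by omega)

/-- Apply `log t ≤ t - 1` to `t = 2 p ^ e / q ^ (1 / r)`. -/
lemma logDivPow_le_of_le_two_mul_pow {p e : ℕ} (hq : 1 ≤ q) (hr : 1 ≤ r) (hp : 1 ≤ p)
    (hrL : (r : ℝ) ≤ Real.log q) (h : q ≤ 2 * p ^ (e * r)) :
    logDivPow p e ≤ 4 * Real.log q / (r * (q : ℝ) ^ ((1 : ℝ) / r)) := by
  have hq0 : (0 : ℝ) < q := mod_cast hq
  have hr0 : (0 : ℝ) < r := mod_cast hr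
  have : (0 : ℝ) < p := mod_cast hp
  have hlogy : Real.log ((q : ℝ) ^ ((1 : ℝ) / r)) = Real.log q / r := by
    rw [Real.log_rpow hq0, one_div_mul_eq_div]
  have hyP := rpow_inv_le_two_mul_pow hr h
  have hy : 0 < (q : ℝ) ^ ((1 : ℝ) / r) := by positivity
  have hLr : 1 ≤ Real.log q / r := (one_le_div hr0).mpr hrL
  rw [logDivPow]
  set y := (q : ℝ) ^ ((1 : ℝ) / r)
  set P := (p : ℝ) ^ e with hP
  have hP0 : 0 < P := by positivity
  have hlog : (e : ℝ) * Real.log p ≤ Real.log q / r + 2 * P / y := by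
    have hle : Real.log (2 * P / y) ≤ 2 * P / y - 1 := Real.log_le_sub_one_of_pos (by positivity)
    rw [Real.log_div (by positivity) hy.ne', Real.log_mul two_ne_zero hP0.ne',
      hP, Real.log_pow, hlogy] at hle
    linarith [Real.log_pos one_lt_two]
  have hinv : P⁻¹ ≤ 2 / y := by
    rw [inv_eq_one_div, div_le_div_iff₀ hP0 hy]
    linarith
  calc (e : ℝ) * Real.log p / P ≤ (Real.log q / r + 2 * P / y) / P := by gcongr
    _ = Real.log q / r * P⁻¹ + 1 * (2 / y) := by field_simp
    _ ≤ Real.log q / r * (2 / y) + Real.log q / r * (2 / y) := by gcongr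
    _ = 4 * Real.log q / (r * y) := by field_simp; ring

/-- The exponent `2 log q / (r log log q) + 2` above which every prime `p > log q` satisfies
`p ^ ((e - 2) / 2) ≥ q ^ (1 / r)`. -/
noncomputable def exponentCutoff (q r : ℕ) : ℝ :=
  2 * Real.log q / (r * Real.log (Real.log q)) + 2

lemma exponentCutoff_le (hq : 3 ≤ q) (hr : 1 ≤ r) :
    exponentCutoff q r ≤ 4 * Real.log q / Real.log (Real.log q) := by
  have hL := one_le_log_natCast hq
  have hl := log_log_natCast_pos hq
  have hr1 : (1 : ℝ) ≤ r := mod_cast hr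
  have hfst : 2 * Real.log q / (r * Real.log (Real.log q)) ≤
      2 * Real.log q / Real.log (Real.log q) := by
    gcongr
    exact le_mul_of_one_le_left hl.le hr1
  have hsnd : 2 ≤ 2 * Real.log q / Real.log (Real.log q) := by
    rw [le_div_iff₀ hl]
    linarith [log_log_natCast_le hq]
  calc exponentCutoff q r
      ≤ 2 * Real.log q / Real.log (Real.log q) + 2 * Real.log q / Real.log (Real.log q) :=
        add_le_add hfst hsnd
    _ = 4 * Real.log q / Real.log (Real.log q) := by ring

lemma rpow_inv_le_rpow_of_exponentCutoff_lt {x e : ℝ} (hq : 3 ≤ q) (hr : 1 ≤ r)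
    (hx : Real.log q < x) (he : exponentCutoff q r < e) :
    (q : ℝ) ^ ((1 : ℝ) / r) ≤ x ^ ((e - 2) / 2) := by
  have hL := one_le_log_natCast hq
  have hl := log_log_natCast_pos hq
  have hr0 : (0 : ℝ) < r := mod_cast hr
  have hx0 : 0 < x := by linarith
  have hlog : 0 ≤ Real.log x := Real.log_nonneg (by linarith)
  have hu : Real.log q / (r * Real.log (Real.log q)) ≤ (e - 2) / 2 := by
    rw [exponentCutoff, mul_div_assoc] at he
    linarith
  rw [Real.rpow_def_of_pos (by positivity), Real.rpow_def_of_pos hx0, Real.exp_le_exp]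
  calc Real.log q * (1 / r)
      = Real.log (Real.log q) * (Real.log q / (r * Real.log (Real.log q))) := by
        field_simp
    _ ≤ Real.log x * ((e - 2) / 2) := by gcongr

lemma le_three_mul_rpow {x e : ℝ} (hx : 2 ≤ x) (he : 2 ≤ e) : e ≤ 3 * x ^ ((e - 2) / 2) := by
  have hexp : Real.log 2 * ((e - 2) / 2) + 1 ≤ x ^ ((e - 2) / 2) :=
    calc Real.log 2 * ((e - 2) / 2) + 1 ≤ Real.exp (Real.log 2 * ((e - 2) / 2)) :=
          Real.add_one_le_exp _
      _ = 2 ^ ((e - 2) / 2) := (Real.rpow_def_of_pos two_pos _).symm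
      _ ≤ x ^ ((e - 2) / 2) := by gcongr
  nlinarith [Real.log_two_gt_d9]

lemma logDivPow_le_of_exponentCutoff_lt {p e : ℕ} (hq : 3 ≤ q) (hr : 1 ≤ r) (hp : 2 ≤ p)
    (he2 : 2 ≤ e) (hpL : Real.log q < p) (he : exponentCutoff q r < e) :
    logDivPow p e ≤ 6 / (q : ℝ) ^ ((1 : ℝ) / r) * (p : ℝ) ^ (-(3 / 2) : ℝ) := by
  have hp0 : (0 : ℝ) < p := by positivity
  have hy := rpow_inv_le_rpow_of_exponentCutoff_lt hq hr hpL he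
  have hle := le_three_mul_rpow (x := p) (e := e) (mod_cast hp) (mod_cast he2)
  have htwo : Real.log p / (p : ℝ) ^ 2 ≤ 2 * (p : ℝ) ^ (-(3 / 2) : ℝ) := by
    have h := logDivPow_two_le (n := p) (by omega)
    rw [logDivPow, Nat.cast_ofNat, mul_div_assoc] at h
    linarith
  have hsplit : (p : ℝ) ^ e =
      (p : ℝ) ^ 2 * ((p : ℝ) ^ (((e : ℝ) - 2) / 2) * (p : ℝ) ^ (((e : ℝ) - 2) / 2)) := by
    rw [← Real.rpow_add hp0, ← Real.rpow_natCast, ← Real.rpow_natCast (p : ℝ) 2,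
      ← Real.rpow_add hp0]
    congr 1
    push_cast
    ring
  rw [logDivPow, hsplit]
  set z := (p : ℝ) ^ (((e : ℝ) - 2) / 2)
  have hz : 0 < z := by positivity
  calc (e : ℝ) * Real.log p / ((p : ℝ) ^ 2 * (z * z))
      ≤ 3 * z * Real.log p / ((p : ℝ) ^ 2 * (z * z)) := by gcongr
    _ = 3 * (Real.log p / (p : ℝ) ^ 2) / z := by field_simp
    _ ≤ 3 * (2 * (p : ℝ) ^ (-(3 / 2) : ℝ)) / (q : ℝ) ^ ((1 : ℝ) / r) := by gcongr
    _ = 6 / (q : ℝ) ^ ((1 : ℝ) / r) * (p : ℝ) ^ (-(3 / 2) : ℝ) := by ring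

/-- The residues `n < q` whose order `gp q r n` divides `2 * e` or `e + 1` for some
`1 ≤ e ≤ N`. -/
noncomputable def smallOrderResidues (q r N : ℕ) : Finset ℕ :=
  (Finset.range q).filter fun n => ∃ e ∈ Finset.Icc 1 N, gp q r n ∣ 2 * e ∨ gp q r n ∣ e + 1

lemma card_filter_gp_dvd_le [Fact q.Prime] (hr : 1 ≤ r) {k : ℕ} (hk : 1 ≤ k) :
    ((Finset.range q).filter fun n => gp q r n ∣ k).card ≤ r * k := by
  refine le_trans ?_ (card_filter_pow_eq_le (Nat.mul_pos hr hk) (1 : ZMod q))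
  refine Finset.card_le_card_of_injOn (fun n : ℕ => (n : ZMod q)) (fun n hn => ?_) ?_
  · simpa using pow_mul_eq_one_of_gp_dvd (Finset.mem_filter.mp hn).2
  · intro a ha b hb hab
    have ha' := Finset.mem_range.mp (Finset.mem_filter.mp ha).1
    have hb' := Finset.mem_range.mp (Finset.mem_filter.mp hb).1
    exact Nat.ModEq.eq_of_lt_of_lt ((ZMod.natCast_eq_natCast_iff _ _ _).mp hab) ha' hb'

lemma card_smallOrderResidues_le [Fact q.Prime] (hr : 1 ≤ r) (N : ℕ) :
    (smallOrderResidues q r N).card ≤ 4 * r * N ^ 2 := by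
  have hsub : smallOrderResidues q r N ⊆ (Finset.Icc 1 N).biUnion fun e =>
      ((Finset.range q).filter fun n => gp q r n ∣ 2 * e) ∪
        (Finset.range q).filter fun n => gp q r n ∣ e + 1 := by
    intro n hn
    obtain ⟨hnq, e, he, hdvd⟩ := Finset.mem_filter.mp hn
    refine Finset.mem_biUnion.mpr ⟨e, he, Finset.mem_union.mpr ?_⟩
    exact hdvd.imp (fun h => Finset.mem_filter.mpr ⟨hnq, h⟩)
      fun h => Finset.mem_filter.mpr ⟨hnq, h⟩
  calc (smallOrderResidues q r N).card ≤ _ := Finset.card_le_card hsub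
    _ ≤ (Finset.Icc 1 N).card * (4 * r * N) := by
        refine Finset.card_biUnion_le_card_mul _ _ _ fun e he => ?_
        obtain ⟨he1, heN⟩ := Finset.mem_Icc.mp he
        calc _ ≤ r * (2 * e) + r * (e + 1) :=
              (Finset.card_union_le _ _).trans (add_le_add
                (card_filter_gp_dvd_le hr (by omega)) (card_filter_gp_dvd_le hr (by omega)))
          _ = r * (2 * e + (e + 1)) := by ring
          _ ≤ r * (4 * N) := Nat.mul_le_mul_left r (by omega)
          _ = 4 * r * N := by ring
    _ = 4 * r * N ^ 2 := by
        rw [Nat.card_Icc, Nat.add_sub_cancel]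
        ring

/-- The integers `n ≤ q` for which only the pointwise bound `logDivPow_le_of_le_two_mul_pow` is
available: those up to `log q` and those of small order. -/
noncomputable def exceptionalSet (q r : ℕ) : Finset ℕ :=
  Finset.Icc 1 ⌊Real.log q⌋₊ ∪ smallOrderResidues q r ⌊exponentCutoff q r⌋₊

lemma mem_exceptionalSet_or {p e : ℕ} (hp : 1 ≤ p) (hpq : p ≠ q) (he : 1 ≤ e)
    (hord : gp q r p ∣ 2 * e ∨ gp q r p ∣ e + 1) :
    p ∈ exceptionalSet q r ∨ q < p ∨ (Real.log q < p ∧ exponentCutoff q r < e) := by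
  rcases le_or_gt (p : ℝ) (Real.log q) with hpL | hpL
  · exact Or.inl (Finset.mem_union_left _ (Finset.mem_Icc.mpr ⟨hp, Nat.le_floor hpL⟩))
  rcases lt_or_gt_of_ne hpq with hlt | hgt
  · rcases le_or_gt (e : ℝ) (exponentCutoff q r) with heG | heG
    · exact Or.inl (Finset.mem_union_right _ (Finset.mem_filter.mpr
        ⟨Finset.mem_range.mpr hlt, e, Finset.mem_Icc.mpr ⟨he, Nat.le_floor heG⟩, hord⟩))
    · exact Or.inr (Or.inr ⟨hpL, heG⟩)
  · exact Or.inr (Or.inl hgt)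

lemma card_exceptionalSet_mul_le [Fact q.Prime] (hq : 3 ≤ q) (hr : 1 ≤ r)
    (hl : 1 ≤ Real.log (Real.log q)) :
    (exceptionalSet q r).card * (4 * Real.log q / (r * (q : ℝ) ^ ((1 : ℝ) / r))) ≤
      260 * rootErrorTerm q r := by
  have hL := one_le_log_natCast hq
  have hlL := log_log_natCast_le hq
  have hr1 : (1 : ℝ) ≤ r := mod_cast hr
  have hy : 0 < (q : ℝ) ^ ((1 : ℝ) / r) := by positivity
  have hcard : ((exceptionalSet q r).card : ℝ) ≤
      Real.log q + 4 * r * (4 * Real.log q / Real.log (Real.log q)) ^ 2 := by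
    have hG0 : 0 ≤ exponentCutoff q r := by
      rw [exponentCutoff]
      positivity
    have hsmall : ((smallOrderResidues q r ⌊exponentCutoff q r⌋₊).card : ℝ) ≤
        4 * r * (⌊exponentCutoff q r⌋₊ : ℝ) ^ 2 := mod_cast card_smallOrderResidues_le hr _
    calc ((exceptionalSet q r).card : ℝ)
        ≤ (Finset.Icc 1 ⌊Real.log q⌋₊).card +
            (smallOrderResidues q r ⌊exponentCutoff q r⌋₊).card :=
          mod_cast Finset.card_union_le _ _
      _ ≤ Real.log q + 4 * r * (⌊exponentCutoff q r⌋₊ : ℝ) ^ 2 := by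
          rw [Nat.card_Icc, Nat.add_sub_cancel]
          exact add_le_add (Nat.floor_le (by linarith)) hsmall
      _ ≤ _ := by
          gcongr
          exact (Nat.floor_le hG0).trans (exponentCutoff_le hq hr)
  rw [rootErrorTerm]
  set L := Real.log q
  set l := Real.log L
  set y := (q : ℝ) ^ ((1 : ℝ) / r)
  calc _ ≤ (L + 4 * r * (4 * L / l) ^ 2) * (4 * L / (r * y)) := by gcongr
    _ = 4 * (L ^ 2 * l / (r * (y * l))) + 256 * (L ^ 3 / (l * (y * l))) := by
        field_simp
        ring
    _ ≤ 4 * (L ^ 2 * L / (1 * (y * l))) + 256 * (L ^ 3 / (1 * (y * l))) := by gcongr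
    _ = 260 * (L ^ 3 / (y * l)) := by ring

/-- A majorant for `logDivPow p e` at the exponents `e` occurring in `S(r, q)`. -/
noncomputable def logDivPowMajorant (q r n : ℕ) : ℝ :=
  (exceptionalSet q r : Set ℕ).indicator
      (fun _ => 4 * Real.log q / (r * (q : ℝ) ^ ((1 : ℝ) / r))) n +
    6 / (q : ℝ) ^ ((1 : ℝ) / r) * (n : ℝ) ^ (-(3 / 2) : ℝ) +
    4 * (Set.Ioi q).indicator (fun n : ℕ => (n : ℝ) ^ (-(3 / 2) : ℝ)) n

lemma logDivPow_le_majorant {p e : ℕ} (hq : 3 ≤ q) (hr : 1 ≤ r) (hrL : (r : ℝ) ≤ Real.log q)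
    (hp : 2 ≤ p) (hpq : p ≠ q) (he : 2 ≤ e) (hqp : q ≤ 2 * p ^ (e * r))
    (hord : gp q r p ∣ 2 * e ∨ gp q r p ∣ e + 1) : logDivPow p e ≤ logDivPowMajorant q r p := by
  have hfst : 0 ≤ (exceptionalSet q r : Set ℕ).indicator
      (fun _ => 4 * Real.log q / (r * (q : ℝ) ^ ((1 : ℝ) / r))) p :=
    Set.indicator_nonneg (fun _ _ => by positivity) p
  have hsnd : 0 ≤ 6 / (q : ℝ) ^ ((1 : ℝ) / r) * (p : ℝ) ^ (-(3 / 2) : ℝ) := by positivity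
  have hthd : 0 ≤ (Set.Ioi q).indicator (fun n : ℕ => (n : ℝ) ^ (-(3 / 2) : ℝ)) p :=
    Set.indicator_nonneg (fun _ _ => by positivity) p
  rw [logDivPowMajorant]
  obtain h | h | ⟨hpL, heG⟩ := mem_exceptionalSet_or (by omega) hpq (by omega) hord
  · rw [Set.indicator_of_mem (Finset.mem_coe.mpr h)]
    linarith [logDivPow_le_of_le_two_mul_pow (by omega) hr (by omega) hrL hqp]
  · rw [Set.indicator_of_mem (Set.mem_Ioi.mpr h)]
    linarith [logDivPow_le hp he]
  · linarith [logDivPow_le_of_exponentCutoff_lt hq hr hp he hpL heG]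

lemma logDivPowMajorant_nonneg (q r n : ℕ) : 0 ≤ logDivPowMajorant q r n :=
  add_nonneg (add_nonneg (Set.indicator_nonneg (fun _ _ => by positivity) n) (by positivity))
    (mul_nonneg (by norm_num) (Set.indicator_nonneg (fun _ _ => by positivity) n))

lemma hasSum_logDivPowMajorant (q r : ℕ) : HasSum (logDivPowMajorant q r)
    ((exceptionalSet q r).card * (4 * Real.log q / (r * (q : ℝ) ^ ((1 : ℝ) / r))) +
      6 / (q : ℝ) ^ ((1 : ℝ) / r) * ∑' n : ℕ, (n : ℝ) ^ (-(3 / 2) : ℝ) +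
      4 * ∑' n : ℕ, (Set.Ioi q).indicator (fun n : ℕ => (n : ℝ) ^ (-(3 / 2) : ℝ)) n) := by
  exact ((hasSum_indicator_const _ _).add (summable_rpow_three_halves.hasSum.mul_left _)).add
    ((summable_rpow_three_halves.indicator _).hasSum.mul_left 4)

lemma abs_Smq_le_of_le_log [Fact q.Prime] (hq : 3 ≤ q) (hr : 1 ≤ r)
    (hrL : (r : ℝ) ≤ Real.log q) (hl : 1 ≤ Real.log (Real.log q)) :
    |Smq q r| ≤ 1000 * errorTerm q r := by
  have hr1 : (1 : ℝ) ≤ r := mod_cast hr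
  have hsum := hasSum_logDivPowMajorant q r
  have hS := abs_Smq_le_of_logDivPow_le hq hr hsum.summable (logDivPowMajorant_nonneg q r)
    fun p e hp => logDivPow_le_majorant hq hr hrL hp.two_le
  rw [hsum.tsum_eq] at hS
  have hmid : 6 / (q : ℝ) ^ ((1 : ℝ) / r) * ∑' n : ℕ, (n : ℝ) ^ (-(3 / 2) : ℝ) ≤
      18 * rootErrorTerm q r :=
    calc _ ≤ 6 / (q : ℝ) ^ ((1 : ℝ) / r) * 3 := by
          gcongr
          exact tsum_rpow_three_halves_le
      _ = 18 * ((q : ℝ) ^ ((1 : ℝ) / r))⁻¹ := by ring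
      _ ≤ 18 * rootErrorTerm q r := by
          gcongr
          exact inv_rpow_le_rootErrorTerm hq r
  have htail : ∑' n : ℕ, (Set.Ioi q).indicator (fun n : ℕ => (n : ℝ) ^ (-(3 / 2) : ℝ)) n ≤
      2 * (r / √q) :=
    calc _ ≤ 2 / √q := tsum_indicator_Ioi_rpow_three_halves_le (by omega)
      _ = 2 * (1 / √q) := by ring
      _ ≤ 2 * (r / √q) := by gcongr
  linarith [card_exceptionalSet_mul_le hq hr hl, rootErrorTerm_le_errorTerm q r,
    natCast_div_sqrt_le_errorTerm hq r, errorTerm_pos hq hr]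

end SmallExponent

/-! ### The Euler–Kronecker constant `γ_{k,q}` -/

lemma exists_pow_eq_neg_one {F : Type*} [Field F] [Finite F] {r : ℕ}
    (h : r * 2 ∣ Nat.card F - 1) : ∃ b : F, b ^ r = -1 := by
  obtain ⟨g, hg⟩ := IsCyclic.exists_ofOrder_eq_natCard (α := Fˣ)
  obtain ⟨m, hm⟩ := h
  rw [← Nat.card_units] at hm
  have hcard : 0 < Nat.card Fˣ := Nat.card_pos
  have hsq : (((g ^ m) ^ r : Fˣ) : F) ^ 2 = 1 := by
    rw [← Units.val_pow_eq_pow_val, ← pow_mul, ← pow_mul, mul_comm, ← hm, pow_card_eq_one',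
      Units.val_one]
  refine ⟨(g ^ m : Fˣ), (sq_eq_one_iff.mp hsq).resolve_left fun hone => ?_⟩
  have hdvd : Nat.card Fˣ ∣ m * r := by
    rw [← hg, orderOf_dvd_iff_pow_eq_one, pow_mul]
    exact Units.ext hone
  have hpos : 0 < m * r := Nat.pos_of_ne_zero fun h0 => by nlinarith
  nlinarith [Nat.le_of_dvd hpos hdvd]

lemma gammakq_gcd (q k : ℕ) : gammakq q (Nat.gcd k (q - 1)) = gammakq q k := by
  simp only [gammakq, Nat.gcd_eq_left (Nat.gcd_dvd_right k (q - 1))]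

lemma abs_eulerMascheroniConstant_le_one : |Real.eulerMascheroniConstant| ≤ 1 := by
  rw [abs_le]
  constructor <;>
    linarith [Real.one_half_lt_eulerMascheroniConstant,
      Real.eulerMascheroniConstant_lt_two_thirds]

section LargeModulus

variable {q r : ℕ}

lemma inv_natCast_div_mul_log_le (hq : 3 ≤ q) (hrq : r ∣ q - 1) :
    (((q - 1) / r : ℕ) : ℝ)⁻¹ * Real.log q ≤ 2 * errorTerm q r := by
  have hL := one_le_log_natCast hq
  have hq1 : 1 ≤ √(q : ℝ) := by
    rw [Real.one_le_sqrt]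
    exact mod_cast (by omega : 1 ≤ q)
  calc (((q - 1) / r : ℕ) : ℝ)⁻¹ * Real.log q
      ≤ √q * (((q - 1) / r : ℕ) : ℝ)⁻¹ * Real.log q := by
        gcongr
        exact le_mul_of_one_le_left (by positivity) hq1
    _ ≤ 2 * (r / √q) * Real.log q :=
        mul_le_mul_of_nonneg_right (sqrt_mul_inv_natCast_div_le (by omega) hrq) (by linarith)
    _ = 2 * (r * Real.log q ^ 1 / √q) := by ring
    _ ≤ 2 * (r * Real.log q ^ 2 / √q) := by
        gcongr
        norm_num
    _ ≤ 2 * errorTerm q r := by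
        gcongr
        exact mul_log_sq_div_sqrt_le_errorTerm hq r

lemma abs_inv_natCast_div_mul_two_mul_gammaK_sub_le [Fact q.Prime] (hq : 3 ≤ q)
    (hrq : r ∣ q - 1) (h2 : 2 ∣ (q - 1) / r)
    (hqx : ((q : ℝ) ^ ((1 : ℝ) / 4))⁻¹ ≤ zeroFreeRadius q ^ 4) :
    |1 / (((q - 1) / r : ℕ) : ℝ) * (2 * gammaK q (2 * r) - gammaK q r)| ≤
      200002 * errorTerm q r := by
  obtain ⟨b, hb⟩ : ∃ b : ZMod q, b ^ r = -1 :=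
    exists_pow_eq_neg_one (by simpa using Nat.mul_dvd_of_dvd_div hrq h2)
  have hmain := inv_mul_norm_sum_mul_logDeriv_one_le hq hrq hb hqx
  have hlog := inv_natCast_div_mul_log_le hq hrq
  rw [two_mul_gammaK_sub_gammaK hb, one_div]
  set H := (((q - 1) / r : ℕ) : ℝ)⁻¹
  set Z := ∑ χ ∈ (charsTrivialOnRoots q r).erase 1, χ b * logDeriv χ.LFunction 1
  have hH0 : 0 ≤ H := by positivity
  rw [abs_mul, abs_of_nonneg hH0]
  calc H * |Real.eulerMascheroniConstant + Z.re|
      ≤ H * (|Real.eulerMascheroniConstant| + ‖Z‖) := by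
        gcongr
        exact (abs_add_le _ _).trans (add_le_add_right (Complex.abs_re_le_norm Z) _)
    _ ≤ H * (Real.log q + ‖Z‖) := by
        gcongr
        exact abs_eulerMascheroniConstant_le_one.trans (one_le_log_natCast hq)
    _ = H * Real.log q + H * ‖Z‖ := mul_add _ _ _
    _ ≤ 200002 * errorTerm q r := by linarith

lemma abs_log_div_natCast_div_mul_le (hq : 3 ≤ q) (hrq : r ∣ q - 1) :
    |Real.log q / ((((q - 1) / r : ℕ) : ℝ) * ((q : ℝ) - 1))| ≤ 2 * errorTerm q r := by
  have hL := one_le_log_natCast hq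
  have hq2 : (1 : ℝ) ≤ q - 1 := by
    have : (3 : ℝ) ≤ q := mod_cast hq
    linarith
  rw [abs_of_nonneg (by positivity), ← div_div]
  calc Real.log q / (((q - 1) / r : ℕ) : ℝ) / ((q : ℝ) - 1)
      ≤ Real.log q / (((q - 1) / r : ℕ) : ℝ) := div_le_self (by positivity) hq2
    _ = (((q - 1) / r : ℕ) : ℝ)⁻¹ * Real.log q := div_eq_inv_mul _ _
    _ ≤ 2 * errorTerm q r := inv_natCast_div_mul_log_le hq hrq

lemma abs_gammakq_sub_le [Fact q.Prime] (hq : 3 ≤ q) (hrq : r ∣ q - 1)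
    (h2 : 2 ∣ (q - 1) / r) (hqx : ((q : ℝ) ^ ((1 : ℝ) / 4))⁻¹ ≤ zeroFreeRadius q ^ 4)
    (hl : 1 ≤ Real.log (Real.log q)) :
    |gammakq q r - Real.eulerMascheroniConstant| ≤ 300000 * errorTerm q r := by
  have hr : 1 ≤ r := Nat.pos_of_dvd_of_pos hrq (by omega)
  have hpos := errorTerm_pos hq hr
  have hgamma := abs_inv_natCast_div_mul_two_mul_gammaK_sub_le hq hrq h2 hqx
  have hlog := abs_log_div_natCast_div_mul_le hq hrq
  have hS : |Smq q r| ≤ 1000 * errorTerm q r := by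
    rcases le_or_gt (r : ℝ) (Real.log q) with h | h
    · exact abs_Smq_le_of_le_log hq hr h hl
    · linarith [abs_Smq_le_of_log_lt hq h, rootErrorTerm_le_errorTerm q r]
  rw [gammakq, Nat.gcd_eq_left hrq]
  rw [abs_le] at hgamma hlog hS ⊢
  constructor <;> linarith

end LargeModulus

lemma eventually_mul_log_pow_le_rpow (C : ℝ) (n : ℕ) {s : ℝ} (hs : 0 < s) :
    ∀ᶠ x : ℝ in atTop, C * Real.log x ^ n ≤ x ^ s := by
  filter_upwards [((isLittleO_log_rpow_rpow_atTop n hs).const_mul_left C).bound one_pos,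
    eventually_ge_atTop 0] with x hx hx0
  rw [one_mul, Real.rpow_natCast, Real.norm_of_nonneg (Real.rpow_nonneg hx0 s)] at hx
  exact (Real.le_norm_self _).trans hx

lemma eventually_inv_rpow_le_zeroFreeRadius_pow :
    ∀ᶠ q : ℕ in atTop, ((q : ℝ) ^ ((1 : ℝ) / 4))⁻¹ ≤ zeroFreeRadius q ^ 4 := by
  filter_upwards [tendsto_natCast_atTop_atTop.eventually
    (eventually_mul_log_pow_le_rpow (2 ^ 160) 36 (s := 1 / 4) (by norm_num)),
    eventually_ge_atTop 3] with q hq hq3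
  have := one_le_log_natCast hq3
  rw [zeroFreeRadius, one_div (_ * _), inv_pow, mul_pow, ← pow_mul, ← pow_mul]
  exact inv_anti₀ (by positivity) hq

lemma eventually_abs_gammakq_sub_le : ∀ᶠ q : ℕ in atTop, ∀ r, q.Prime → r ∣ q - 1 →
    2 ∣ (q - 1) / r →
      |gammakq q r - Real.eulerMascheroniConstant| ≤ 300000 * errorTerm q r := by
  have hloglog : ∀ᶠ q : ℕ in atTop, 1 ≤ Real.log (Real.log q) :=
    ((Real.tendsto_log_atTop.comp Real.tendsto_log_atTop).comp
      tendsto_natCast_atTop_atTop).eventually_ge_atTop 1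
  filter_upwards [eventually_inv_rpow_le_zeroFreeRadius_pow, hloglog, eventually_ge_atTop 3]
    with q hqx hl hq r hqp hrq h2
  have : Fact q.Prime := ⟨hqp⟩
  exact abs_gammakq_sub_le hq hrq h2 hqx hl

/-- There is an absolute constant `C > 0` such that for every odd prime `q`
and integer `k ≥ 1` with `r = gcd(k, q−1)` and `h = (q−1)/r` even,
`|γ_{k,q} − γ| ≤ C·((log q)³/(q^{1/r}·log log q) + r·(log q)²/√q)`. -/
theorem statement3 :
    ∃ C : ℝ, 0 < C ∧ ∀ q k r : ℕ, q.Prime → q ≠ 2 → 1 ≤ k →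
      r = Nat.gcd k (q - 1) → 2 ∣ (q - 1) / r →
      |gammakq q k - Real.eulerMascheroniConstant| ≤
        C * (Real.log q ^ 3 / ((q : ℝ) ^ ((1 : ℝ) / r) * Real.log (Real.log q))
          + r * Real.log q ^ 2 / Real.sqrt q) := by
  obtain ⟨N, hN⟩ := eventually_atTop.mp eventually_abs_gammakq_sub_le
  obtain ⟨D, hD⟩ := ((Set.finite_Iio N).image2
    (fun q r => |gammakq q r - Real.eulerMascheroniConstant| / errorTerm q r)
    (Set.finite_Iio N)).bddAbove
  refine ⟨max 300000 D, lt_max_of_lt_left (by norm_num), fun q k r hqp hq2 _ hrk h2 => ?_⟩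
  have hq : 3 ≤ q := hqp.two_le.lt_of_ne' hq2
  have hrq : r ∣ q - 1 := hrk ▸ Nat.gcd_dvd_right _ _
  have hpos : 0 < errorTerm q r := errorTerm_pos hq (Nat.pos_of_dvd_of_pos hrq (by omega))
  rw [← gammakq_gcd, ← hrk]
  change _ ≤ max 300000 D * errorTerm q r
  rcases le_or_gt N q with hNq | hqN
  · exact (hN q hNq r hqp hrq h2).trans (by gcongr; exact le_max_left _ _)
  · have hrN : r < N := ((Nat.le_of_dvd (by omega) hrq).trans (Nat.sub_le q 1)).trans_lt hqN
    refine ((div_le_iff₀ hpos).mp (hD (Set.mem_image2_of_mem hqN hrN))).trans ?_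
    gcongr
    exact le_max_right _ _
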